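/- arXiv:2509.02501 — 4 statements merged into one kernel-verified Lean document; each statement's English description precedes it below -/
import Mathlib

section
/- Let n ≥ 1 be an integer and let ρ be an irreducible finite-dimensional complex representation of SL(2, ℤ/nℤ). If ρ(t) has a unique eigenvalue, then ρ is one-dimensional. -/
/-- The group `SL(2, ℤ/nℤ)`. -/
abbrev SL2 (n : ℕ) := Matrix.SpecialLinearGroup (Fin 2) (ZMod n)

/-- The element `t = [[1,1],[0,1]]` of `SL(2, ℤ/nℤ)`. -/
def tGen (n : ℕ) : SL2 n := ⟨!![1, 1; 0, 1], by simp [Matrix.det_fin_two_of]⟩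

/-- A representation is irreducible if the space is nonzero and the only invariant
subspaces are `⊥` and `⊤`. -/
def IsIrreducibleRep {G V : Type} [Group G] [AddCommGroup V] [Module ℂ V]
    (ρ : Representation ℂ G V) : Prop :=
  Nontrivial V ∧ ∀ p : Submodule ℂ V, (∀ g : G, p.map (ρ g) ≤ p) → p = ⊥ ∨ p = ⊤


/-- upper elementary matrix -/
def eUp (n : ℕ) (x : ZMod n) : SL2 n := ⟨!![1, x; 0, 1], by simp [Matrix.det_fin_two_of]⟩

/-- lower elementary matrix -/
def eLo (n : ℕ) (x : ZMod n) : SL2 n := ⟨!![1, 0; x, 1], by simp [Matrix.det_fin_two_of]⟩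

lemma eUp_coe (n : ℕ) (x : ZMod n) : (eUp n x).1 = !![1, x; 0, 1] := rfl

lemma eLo_coe (n : ℕ) (x : ZMod n) : (eLo n x).1 = !![1, 0; x, 1] := rfl

lemma tGen_coe (n : ℕ) : (tGen n).1 = !![1, 1; 0, 1] := rfl

lemma tGen_pow (n k : ℕ) : tGen n ^ k = eUp n k := by
  induction k with
  | zero => ext i j; fin_cases i <;> fin_cases j <;> simp [eUp]
  | succ k ih =>
    rw [pow_succ, ih]
    ext i j
    fin_cases i <;> fin_cases j <;>
      simp [eUp_coe, tGen_coe, Matrix.mul_apply, Fin.sum_univ_two, add_comm]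

/-- The Weyl element. -/
def wGen (n : ℕ) : SL2 n := ⟨!![0, -1; 1, 0], by simp [Matrix.det_fin_two_of]⟩

lemma wGen_coe (n : ℕ) : (wGen n).1 = !![0, -1; 1, 0] := rfl

lemma w_conj (n : ℕ) (x : ZMod n) : wGen n * eUp n x * (wGen n)⁻¹ = eLo n (-x) := by
  rw [mul_inv_eq_iff_eq_mul]
  ext i j
  fin_cases i <;> fin_cases j <;>
    simp [eUp_coe, eLo_coe, wGen_coe, Matrix.mul_apply, Fin.sum_univ_two]

lemma w_eq (n : ℕ) : wGen n = eUp n (-1) * eLo n 1 * eUp n (-1) := by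
  ext i j
  fin_cases i <;> fin_cases j <;>
    simp [eUp_coe, eLo_coe, wGen_coe, Matrix.mul_apply, Fin.sum_univ_two]

lemma base_eq (n : ℕ) (g : SL2 n) (h : g.1 1 0 = 0) :
    g = eUp n (g.1 0 0) * eLo n (-(g.1 1 1)) * eUp n (g.1 0 0) *
      (eUp n (-1) * eLo n 1 * eUp n (-1)) * eUp n (g.1 1 1 * g.1 0 1) := by
  have hd := g.2
  rw [Matrix.det_fin_two, h] at hd
  generalize ha : g.1 0 0 = a at *
  generalize hb : g.1 0 1 = b at *
  generalize hdd : g.1 1 1 = d at *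
  have hd' : a * d = 1 := by linear_combination hd
  have hg : g.1 = !![a, b; 0, d] := by
    ext i j
    fin_cases i <;> fin_cases j <;> simp [ha, hb, hdd, h]
  apply Subtype.ext
  rw [hg]
  simp only [Matrix.SpecialLinearGroup.coe_mul, eUp_coe, eLo_coe, Matrix.mul_fin_two]
  ext i j
  fin_cases i <;> fin_cases j <;> simp <;> grind

lemma all_mem (n : ℕ) (hn : 1 ≤ n) (H : Subgroup (SL2 n)) (hu : ∀ x, eUp n x ∈ H)
    (hl : ∀ x, eLo n x ∈ H) : ∀ (m : ℕ) (g : SL2 n), (g.1 1 0).val = m → g ∈ H := by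
  haveI : NeZero n := ⟨by omega⟩
  have hw : wGen n ∈ H := by
    rw [w_eq]; exact H.mul_mem (H.mul_mem (hu _) (hl _)) (hu _)
  intro m
  induction m using Nat.strong_induction_on with
  | _ m ih =>
  intro g hg
  rcases Nat.eq_zero_or_pos m with h0 | hpos
  · have : g.1 1 0 = 0 := by rw [← ZMod.val_eq_zero]; omega
    rw [base_eq n g this]
    exact H.mul_mem (H.mul_mem (H.mul_mem (H.mul_mem (hu _) (hl _)) (hu _))
      (H.mul_mem (H.mul_mem (hu _) (hl _)) (hu _))) (hu _)
  · set q : ℕ := (g.1 0 0).val / m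
    have hk : wGen n * eUp n (-(q : ZMod n)) * g ∈ H := by
      refine ih ((g.1 0 0).val % m) (Nat.mod_lt _ hpos) _ ?_
      have e : (wGen n * eUp n (-(q : ZMod n)) * g).1 1 0 = g.1 0 0 - q * g.1 1 0 := by
        simp [wGen_coe, eUp_coe, Matrix.mul_apply, Fin.sum_univ_two]
        ring
      have e2 : g.1 0 0 - q * g.1 1 0 = (((g.1 0 0).val % m : ℕ) : ZMod n) := by
        have h1 : ((m * q + (g.1 0 0).val % m : ℕ) : ZMod n) = g.1 0 0 := by
          rw [add_comm, Nat.mod_add_div, ZMod.natCast_zmod_val]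
        have h2 : ((m : ℕ) : ZMod n) = g.1 1 0 := by
          rw [← hg, ZMod.natCast_zmod_val]
        push_cast at h1 ⊢
        rw [h2] at h1
        linear_combination -h1
      rw [e, e2, ZMod.val_natCast_of_lt]
      exact lt_of_le_of_lt (Nat.mod_le _ _) (ZMod.val_lt _)
    have := H.mul_mem (H.inv_mem (H.mul_mem hw (hu (-(q : ZMod n))))) hk
    rwa [inv_mul_cancel_left] at this

lemma scalar_of_pow {V : Type} [AddCommGroup V] [Module ℂ V] [FiniteDimensional ℂ V]
    (f : Module.End ℂ V) (n : ℕ) (hn : 1 ≤ n) (hf : f ^ n = 1)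
    (h1 : (spectrum ℂ f).ncard = 1) : ∃ c : ℂ, ∀ v, f v = c • v := by
  obtain ⟨c, hc⟩ := Set.ncard_eq_one.mp h1
  have hs : f.IsSemisimple := by
    apply Module.End.isSemisimple_of_squarefree_aeval_eq_zero
      (p := (Polynomial.X ^ n - 1 : Polynomial ℂ))
    · apply Polynomial.Separable.squarefree
      exact Polynomial.separable_X_pow_sub_C (1 : ℂ) (by exact_mod_cast (by omega : n ≠ 0)) one_ne_zero
    · simp [hf]
  have ht := hs.iSup_eigenspace_eq_top
  have hle : (⨆ μ, f.eigenspace μ) ≤ f.eigenspace c := by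
    apply iSup_le
    intro μ
    by_cases hμ : f.HasEigenvalue μ
    · have := hμ.mem_spectrum
      rw [hc] at this
      rw [Set.mem_singleton_iff.mp this]
    · have : f.eigenspace μ = ⊥ := by
        simpa [Module.End.hasEigenvalue_iff] using hμ
      rw [this]; exact bot_le
  rw [ht] at hle
  exact ⟨c, fun v => Module.End.mem_eigenspace_iff.mp (hle trivial)⟩

theorem stmt0 (n : ℕ) (hn : 1 ≤ n)
    (V : Type) [AddCommGroup V] [Module ℂ V] [FiniteDimensional ℂ V]
    (ρ : Representation ℂ (SL2 n) V)
    (hirr : IsIrreducibleRep ρ)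
    (h1 : (spectrum ℂ (ρ (tGen n))).ncard = 1) :
    Module.finrank ℂ V = 1 := by
  haveI : NeZero n := ⟨by omega⟩
  obtain ⟨hnt, hirr⟩ := hirr
  have htn : (ρ (tGen n)) ^ n = 1 := by
    rw [← map_pow, tGen_pow]
    have : eUp n (n : ZMod n) = 1 := by
      ext i j; fin_cases i <;> fin_cases j <;> simp [eUp]
    rw [this, map_one]
  obtain ⟨c, hc⟩ := scalar_of_pow _ n hn htn h1
  let H : Subgroup (SL2 n) :=
    { carrier := {g | ∃ c : ℂ, ∀ v, ρ g v = c • v}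
      one_mem' := ⟨1, by simp⟩
      mul_mem' := by
        rintro a b ⟨x, hx⟩ ⟨y, hy⟩
        exact ⟨x * y, fun v => by simp [hx, hy, smul_smul, mul_comm]⟩
      inv_mem' := by
        rintro a ⟨x, hx⟩
        refine ⟨x⁻¹, fun v => ?_⟩
        have hv : ρ a (ρ a⁻¹ v) = v := by
          rw [← Module.End.mul_apply, ← map_mul]; simp
        rw [hx] at hv
        have hx0 : x ≠ 0 := by
          rintro rfl
          obtain ⟨w, hw⟩ := exists_ne (0 : V)
          have : ρ a (ρ a⁻¹ w) = w := by
            rw [← Module.End.mul_apply, ← map_mul]; simp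
          rw [hx] at this
          exact hw (by simpa using this.symm)
        rw [eq_inv_smul_iff₀ hx0, hv] }
  have hu : ∀ x, eUp n x ∈ H := by
    intro x
    have : tGen n ^ x.val ∈ H := H.pow_mem (⟨c, hc⟩ : tGen n ∈ H) _
    rwa [tGen_pow, ZMod.natCast_zmod_val] at this
  have hconj : ∀ g h : SL2 n, h ∈ H → g * h * g⁻¹ ∈ H := by
    rintro g h ⟨x, hx⟩
    refine ⟨x, fun v => ?_⟩
    have hv : ρ g (ρ g⁻¹ v) = v := by
      rw [← Module.End.mul_apply, ← map_mul]; simp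
    rw [map_mul, map_mul, Module.End.mul_apply, Module.End.mul_apply, hx, map_smul, hv]
  have hl : ∀ x, eLo n x ∈ H := by
    intro x
    have := hconj (wGen n) _ (hu (-x))
    rwa [w_conj, neg_neg] at this
  obtain ⟨w, hw⟩ := exists_ne (0 : V)
  rcases hirr (Submodule.span ℂ {w}) (by
    intro g
    obtain ⟨x, hx⟩ := all_mem n hn H hu hl _ g rfl
    rw [Submodule.map_span_le]
    rintro m hm
    rw [hx]
    exact Submodule.smul_mem _ _ (Submodule.subset_span hm)) with h | h
  · exact absurd (by simpa using h) hw
  · rw [← finrank_top ℂ V, ← h]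
    exact finrank_span_singleton hw
end

section
/- Let n ≥ 1 be an integer and let ρ be an irreducible finite-dimensional complex representation of SL(2, ℤ/nℤ) such that ρ(t) has exactly two distinct eigenvalues ζ and ζ′. Then the ratio ζ′·ζ⁻¹ is a root of unity whose order is 2, 3, 4, or 5. -/
/-- Galois conjugation for the trace identity. -/
lemma galois_conj {N : ℕ} (hN : 0 < N) {r w : ℂ} (hr : r ^ N = 1) (hw : w ^ N = 1)
    (h : 1 + r + r⁻¹ = w + w⁻¹) {k : ℕ} (hk : k.Coprime N) :
    1 + r ^ k + (r ^ k)⁻¹ = w ^ k + (w ^ k)⁻¹ := by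
  have hζ := Complex.isPrimitiveRoot_exp N hN.ne'
  set ζ := Complex.exp (2 * Real.pi * Complex.I / N) with hζd
  have : NeZero N := ⟨hN.ne'⟩
  obtain ⟨a, -, rfl⟩ := hζ.eq_pow_of_pow_eq_one hr
  obtain ⟨b, -, rfl⟩ := hζ.eq_pow_of_pow_eq_one hw
  have inv : ∀ x : ℂ, x ^ N = 1 → x ^ (N - 1) = x⁻¹ := by
    intro x hx
    apply eq_inv_of_mul_eq_one_left
    rw [← pow_succ, Nat.sub_add_cancel hN, hx]
  let P : Polynomial ℤ := 1 + Polynomial.X ^ a + Polynomial.X ^ (a * (N - 1))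
    - Polynomial.X ^ b - Polynomial.X ^ (b * (N - 1))
  have hP : Polynomial.aeval ζ P = 0 := by
    simp only [P, map_add, map_sub, map_one, map_pow, Polynomial.aeval_X, pow_mul]
    rw [inv _ hr, inv _ hw, h]; ring
  have hd : minpoly ℤ ζ ∣ P := minpoly.isIntegrallyClosed_dvd (hζ.isIntegral hN) hP
  have hP' : Polynomial.aeval (ζ ^ k) P = 0 := by
    rw [hζ.minpoly_eq_pow_coprime hk] at hd
    exact Polynomial.aeval_eq_zero_of_dvd_aeval_eq_zero hd (minpoly.aeval _ _)
  have e1 : ((ζ ^ a) ^ k) ^ N = 1 := by rw [pow_right_comm, hr, one_pow]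
  have e2 : ((ζ ^ b) ^ k) ^ N = 1 := by rw [pow_right_comm, hw, one_pow]
  simp only [P, map_add, map_sub, map_one, map_pow, Polynomial.aeval_X, pow_mul] at hP'
  rw [pow_right_comm ζ k a, pow_right_comm ζ k b, inv _ e1, inv _ e2] at hP'
  linear_combination hP'

lemma order_lemma {N : ℕ} (hN : 0 < N) {r w : ℂ} (hr : r ^ N = 1) (hw : w ^ N = 1)
    (hr1 : r ≠ 1) (hw1 : w ≠ 1) (h : 1 + r + r⁻¹ = w + w⁻¹) :
    orderOf r ∈ ({2, 3, 4, 5} : Set ℕ) := by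
  have : NeZero N := ⟨hN.ne'⟩
  have hmN : orderOf r ∣ N := orderOf_dvd_of_pow_eq_one hr
  have hm0 : 0 < orderOf r := Nat.pos_of_dvd_of_pos hmN hN
  have hm1 : orderOf r ≠ 1 := by rwa [Ne, orderOf_eq_one_iff]
  have hprim := IsPrimitiveRoot.orderOf r
  set m := orderOf r with hm
  have : NeZero m := ⟨hm0.ne'⟩
  have hm6 : m ≠ 6 := by
    intro h6
    rw [h6] at hprim
    have h3 : r ^ 3 ≠ 1 := hprim.pow_ne_one_of_pos_of_lt (by norm_num) (by norm_num)
    have h2 : r ^ 2 ≠ 1 := hprim.pow_ne_one_of_pos_of_lt (by norm_num) (by norm_num)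
    have h6 : r ^ 6 = 1 := hprim.pow_eq_one
    have h0 : (r ^ 3 - 1) * ((r + 1) * (r ^ 2 - r + 1)) = 0 := by linear_combination h6
    have hr0 : r ≠ 0 := by rintro rfl; simp at h6
    have hw0 : w ≠ 0 := by rintro rfl; simp [hN.ne'] at hw
    rcases mul_eq_zero.1 h0 with h0 | h0
    · exact h3 (by linear_combination h0)
    rcases mul_eq_zero.1 h0 with h0 | h0
    · exact h2 (by linear_combination (r - 1) * h0)
    have e : r + r⁻¹ = 1 := by field_simp; linear_combination h0
    have e2 : w + w⁻¹ = 2 := by rw [← h, add_assoc, e]; norm_num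
    field_simp at e2
    have : (w - 1) ^ 2 = 0 := by linear_combination e2
    exact hw1 (sub_eq_zero.1 (pow_eq_zero_iff (by norm_num) |>.1 this))
  have hm7 : m ≤ 6 := by
    by_contra! hlt
    have hp0 := Complex.isPrimitiveRoot_exp m hm0.ne'
    obtain ⟨j, -, hj, hjr⟩ := (hprim.isPrimitiveRoot_iff).1 hp0
    obtain ⟨u, hu⟩ := ZMod.unitsMap_surjective hmN (ZMod.unitOfCoprime j hj)
    have hk : (u : ZMod N).val.Coprime N := ZMod.val_coe_unit_coprime u
    have hmod : (u : ZMod N).val ≡ j [MOD m] := by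
      rw [← ZMod.natCast_eq_natCast_iff]
      have := congrArg (fun x : (ZMod m)ˣ => (x : ZMod m)) hu
      simp only [ZMod.unitsMap_val, ZMod.coe_unitOfCoprime] at this
      rw [← this, ZMod.natCast_val]
    have hpow : r ^ (u : ZMod N).val = Complex.exp (2 * Real.pi * Complex.I / m) := by
      rw [← hjr]; rw [pow_eq_pow_mod _ hprim.pow_eq_one, hmod, ← pow_eq_pow_mod _ hprim.pow_eq_one]
    have key := galois_conj hN hr hw h hk
    have nrm : ∀ x : ℂ, x ^ N = 1 → (x⁻¹).re = x.re ∧ x.re ≤ 1 := by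
      intro x hx
      have hn : ‖x‖ = 1 := Complex.norm_eq_one_of_pow_eq_one hx hN.ne'
      constructor
      · rw [Complex.inv_re, Complex.normSq_eq_norm_sq, hn]; simp
      · exact hn ▸ Complex.re_le_norm x
    have e1 : (r ^ (u : ZMod N).val) ^ N = 1 := by rw [pow_right_comm, hr, one_pow]
    have e2 : (w ^ (u : ZMod N).val) ^ N = 1 := by rw [pow_right_comm, hw, one_pow]
    have key2 := congrArg Complex.re key
    simp only [Complex.add_re, (nrm _ e1).1, (nrm _ e2).1, Complex.one_re] at key2
    have hle := (nrm _ e2).2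
    have hre : (r ^ (u : ZMod N).val).re = Real.cos (2 * Real.pi / m) := by
      rw [hpow, show (2 * Real.pi * Complex.I / m : ℂ) = ((2 * Real.pi / m : ℝ) : ℂ) * Complex.I by
        push_cast; ring, Complex.exp_ofReal_mul_I_re]
    have hm7' : (7 : ℝ) ≤ m := by exact_mod_cast hlt
    have hcos : Real.cos (Real.pi / 3) < Real.cos (2 * Real.pi / m) := by
      have hpi := Real.pi_pos
      apply Real.cos_lt_cos_of_nonneg_of_le_pi
      · positivity
      · linarith
      · rw [div_lt_div_iff₀ (by linarith) (by norm_num)]; nlinarith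
    rw [Real.cos_pi_div_three] at hcos
    linarith
  clear_value m
  interval_cases m <;> simp_all

lemma hecke_identity {R : Type*} [Ring R] [Algebra ℂ R] (A B : R) (s p : ℂ)
    (hA : A * A = s • A - p • 1) (hB : B * B = s • B - p • 1) (hAB : B * (A * B) = A * (B * A))
    (Y : R) (hY : Y = s • A - A * B) :
    Y * Y * Y - (s ^ 2) • (Y * Y) + (s ^ 2 * p) • Y - p ^ 3 • 1 = 0 := by
  have hA' : ∀ x, A * (A * x) = s • (A * x) - p • x := by
    intro x; rw [← mul_assoc, hA]; simp [sub_mul]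
  have hB' : ∀ x, B * (B * x) = s • (B * x) - p • x := by
    intro x; rw [← mul_assoc, hB]; simp [sub_mul]
  have hAB' : ∀ x, B * (A * (B * x)) = A * (B * (A * x)) := by
    intro x
    have := congrArg (· * x) hAB
    simpa [mul_assoc] using this
  subst hY
  simp only [mul_sub, sub_mul, mul_assoc, smul_mul_assoc, mul_smul_comm, hA, hB, hAB, hA', hB', hAB',
    smul_sub, smul_smul, mul_one, one_mul]
  module

lemma aeval_zero_of_spectrum {V : Type} [AddCommGroup V] [Module ℂ V] [FiniteDimensional ℂ V]
    (T : Module.End ℂ V) {N : ℕ} (hN : 0 < N) (hT : T ^ N = 1) (p : Polynomial ℂ) (hp : p ≠ 0)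
    (h : ∀ x, T.HasEigenvalue x → p.eval x = 0) : Polynomial.aeval T p = 0 := by
  have h1 : minpoly ℂ T ∣ Polynomial.X ^ N - Polynomial.C 1 := by
    apply minpoly.dvd; simp [hT]
  have hsep : (Polynomial.X ^ N - Polynomial.C (1:ℂ)).Separable :=
    Polynomial.separable_X_pow_sub_C 1 (by exact_mod_cast hN.ne') one_ne_zero
  have hnd : (minpoly ℂ T).roots.Nodup := Polynomial.nodup_roots (hsep.of_dvd h1)
  have hint : IsIntegral ℂ T := Algebra.IsIntegral.isIntegral T
  have hd : minpoly ℂ T ∣ p := by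
    rw [(IsAlgClosed.splits (minpoly ℂ T)).eq_prod_roots_of_monic (minpoly.monic hint),
      Multiset.prod_X_sub_C_dvd_iff_le_roots hp, Multiset.le_iff_subset hnd]
    intro x hx
    rw [Polynomial.mem_roots hp]
    apply h
    apply Module.End.hasEigenvalue_of_isRoot
    exact (Polynomial.mem_roots (minpoly.ne_zero hint)).1 hx
  obtain ⟨q, rfl⟩ := hd
  simp

/-- The element `[[1,0],[-1,1]]`. -/
def bGen (n : ℕ) : SL2 n := ⟨!![1, 0; -1, 1], by simp [Matrix.det_fin_two_of]⟩

lemma vmul {n : ℕ} (g h : SL2 n) : (g * h).1 = g.1 * h.1 := rfl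

lemma braid (n : ℕ) : bGen n * (tGen n * bGen n) = tGen n * (bGen n * tGen n) := by
  apply Subtype.ext
  simp only [vmul]; simp [bGen, tGen, Matrix.mul_fin_two]

lemma gen_top (n : ℕ) (H : Subgroup (SL2 n)) (ht : tGen n ∈ H) (hb : bGen n ∈ H) (g : SL2 n) :
    g ∈ H := by
  let U : ZMod n → SL2 n := fun x => ⟨!![1, x; 0, 1], by simp [Matrix.det_fin_two_of]⟩
  let L : ZMod n → SL2 n := fun x => ⟨!![1, 0; x, 1], by simp [Matrix.det_fin_two_of]⟩
  have U0 : U 0 = 1 := by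
    apply Subtype.ext; simp [U, Matrix.one_fin_two]
  have L0 : L 0 = 1 := by
    apply Subtype.ext; simp [L, Matrix.one_fin_two]
  have Ua : ∀ x y, U (x + y) = U x * U y := by
    intro x y; apply Subtype.ext; simp only [vmul]; simp [U, Matrix.mul_fin_two, add_comm]
  have La : ∀ x y, L (x + y) = L x * L y := by
    intro x y; apply Subtype.ext; simp only [vmul]; simp [L, Matrix.mul_fin_two, add_comm]
  have hUn : ∀ k : ℕ, U k ∈ H := by
    intro k
    induction k with
    | zero => simp [U0, H.one_mem]
    | succ k ih => rw [Nat.cast_succ, Ua]; exact H.mul_mem ih ht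
  have hLn : ∀ k : ℕ, L (-k) ∈ H := by
    intro k
    induction k with
    | zero => simp [L0, H.one_mem]
    | succ k ih => rw [Nat.cast_succ, neg_add, La]; exact H.mul_mem ih hb
  have hU : ∀ k : ℤ, U k ∈ H := by
    intro k
    obtain ⟨k, rfl | rfl⟩ := k.eq_nat_or_neg
    · simpa using hUn k
    · have e : U (k : ZMod n) * U ((-(k : ℤ) : ℤ) : ZMod n) = 1 := by rw [← Ua]; simp [U0]
      rw [eq_inv_of_mul_eq_one_right e]
      exact H.inv_mem (hUn k)
  have hL : ∀ k : ℤ, L k ∈ H := by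
    intro k
    obtain ⟨k, rfl | rfl⟩ := k.eq_nat_or_neg
    · have e : L (-(k : ZMod n)) * L ((k : ℤ) : ZMod n) = 1 := by rw [← La]; simp [L0]
      rw [eq_inv_of_mul_eq_one_right e]
      exact H.inv_mem (hLn k)
    · simpa using hLn k
  have hU' : ∀ x, U x ∈ H := fun x => by
    obtain ⟨k, rfl⟩ := ZMod.intCast_surjective x; exact hU k
  have hL' : ∀ x, L x ∈ H := fun x => by
    obtain ⟨k, rfl⟩ := ZMod.intCast_surjective x; exact hL k
  let S : SL2 n := ⟨!![0, -1; 1, 0], by simp [Matrix.det_fin_two_of]⟩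
  have hS : S ∈ H := by
    have : S = U (-1) * (L 1 * U (-1)) := by
      apply Subtype.ext; simp only [vmul]; simp [U, L, S, Matrix.mul_fin_two]
    rw [this]
    exact H.mul_mem (hU' _) (H.mul_mem (hL' _) (hU' _))
  have main : ∀ (N : ℕ) (k m : ℤ) (g : SL2 n), m.natAbs = N → g.1 0 0 = k → g.1 1 0 = m →
      g ∈ H := by
    intro N
    induction N using Nat.strong_induction_on with
    | _ N ih =>
    intro k m g hN hk hm
    by_cases hm0 : m = 0
    · subst hm0
      have hdet := g.2
      rw [Matrix.det_fin_two, hm] at hdet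
      have : g = U (g.1 0 1 * g.1 0 0) * (U (g.1 0 0) * (L (-g.1 1 1) * (U (g.1 0 0) * S))) := by
        apply Subtype.ext
        simp only [Int.cast_zero, mul_zero, sub_zero] at hdet hm
        have h2 : g.1 1 1 * g.1 0 0 = 1 := by rw [mul_comm]; exact hdet
        ext i j
        fin_cases i <;> fin_cases j <;>
          (simp only [vmul]; simp [U, L, S, Matrix.mul_apply, Fin.sum_univ_two, hm])
        · linear_combination (g.1 0 0 + g.1 0 0 * g.1 0 1) * h2
        · linear_combination (-1 - g.1 0 1) * h2
        · linear_combination h2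
      rw [this]
      exact H.mul_mem (hU' _) (H.mul_mem (hU' _) (H.mul_mem (hL' _) (H.mul_mem (hU' _) hS)))
    · have hlt : (k % m).natAbs < N := by
        rw [← hN]
        have h1 := Int.emod_nonneg k hm0
        have h2 := Int.emod_lt_abs k hm0
        rw [Int.abs_eq_natAbs] at h2
        omega
      have h' := ih _ hlt (-m) (k % m) (S * (U (-(k / m : ℤ)) * g)) rfl ?_ ?_
      · rwa [H.mul_mem_cancel_left hS, H.mul_mem_cancel_left (hU' _)] at h'
      · simp only [vmul]; simp [S, U, Matrix.mul_apply, Matrix.vecMul, dotProduct, Fin.sum_univ_two, hm]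
      · have e : ((k % m : ℤ) : ZMod n) = k - m * (k / m : ℤ) := by
          rw [Int.emod_def]; push_cast; rfl
        rw [e]
        simp only [vmul]; simp [S, U, Matrix.mul_apply, Matrix.vecMul, dotProduct, Fin.sum_univ_two, hm, hk]
        ring
  obtain ⟨k, hk⟩ := ZMod.intCast_surjective (g.1 0 0)
  obtain ⟨m, hm⟩ := ZMod.intCast_surjective (g.1 1 0)
  exact main _ k m g rfl hk.symm hm.symm

/-- If `ρ` is an irreducible finite-dimensional complex representation of `SL(2, ℤ/nℤ)`
whose `t`-spectrum consists of exactly two distinct eigenvalues `z` and `z'`, then the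
ratio `z' * z⁻¹` is a root of unity of order `2`, `3`, `4`, or `5`. -/
theorem stmt5 (n : ℕ) (hn : 1 ≤ n)
    (V : Type) [AddCommGroup V] [Module ℂ V] [FiniteDimensional ℂ V]
    (ρ : Representation ℂ (SL2 n) V)
    (hirr : IsIrreducibleRep ρ)
    (z z' : ℂ) (hne : z ≠ z')
    (hspec : spectrum ℂ (ρ (tGen n)) = {z, z'}) :
    orderOf (z' * z⁻¹) ∈ ({2, 3, 4, 5} : Set ℕ) := by
  have : NeZero n := ⟨by omega⟩
  have : Finite (SL2 n) := inferInstance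
  have hN : 0 < Nat.card (SL2 n) := Nat.card_pos
  have hpow : ∀ g : SL2 n, ρ g ^ Nat.card (SL2 n) = 1 := by
    intro g; rw [← map_pow, pow_card_eq_one', map_one]
  set N := Nat.card (SL2 n)
  have heigpow : ∀ (g : SL2 n) (x : ℂ), Module.End.HasEigenvalue (ρ g) x → x ^ N = 1 := by
    intro g x hx
    obtain ⟨v, hv⟩ := hx.exists_hasEigenvector
    have h1 := hv.pow_apply N
    rw [hpow] at h1
    have h2 : (x ^ N - 1) • v = 0 := by rw [sub_smul, ← h1]; simp
    rcases smul_eq_zero.1 h2 with h | h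
    · exact sub_eq_zero.1 h
    · exact absurd h hv.2
  have hz : Module.End.HasEigenvalue (ρ (tGen n)) z := by
    rw [Module.End.hasEigenvalue_iff_mem_spectrum, hspec]; simp
  have hz' : Module.End.HasEigenvalue (ρ (tGen n)) z' := by
    rw [Module.End.hasEigenvalue_iff_mem_spectrum, hspec]; simp
  have hzN := heigpow _ _ hz
  have hzN' := heigpow _ _ hz'
  have hz0 : z ≠ 0 := by rintro rfl; simp [hN.ne'] at hzN
  have hz0' : z' ≠ 0 := by rintro rfl; simp [hN.ne'] at hzN'
  have hAq : ρ (tGen n) * ρ (tGen n) = (z + z') • ρ (tGen n) - (z * z') • 1 := by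
    have := aeval_zero_of_spectrum (ρ (tGen n)) hN (hpow _)
      ((Polynomial.X - Polynomial.C z) * (Polynomial.X - Polynomial.C z'))
      (mul_ne_zero (Polynomial.X_sub_C_ne_zero _) (Polynomial.X_sub_C_ne_zero _)) (by
        intro x hx
        rw [Module.End.hasEigenvalue_iff_mem_spectrum, hspec] at hx
        rcases hx with rfl | rfl <;> simp)
    simp only [map_mul, map_sub, Polynomial.aeval_X, Polynomial.aeval_C,
      Algebra.algebraMap_eq_smul_one, mul_sub, sub_mul, smul_mul_assoc, mul_smul_comm, mul_one,
      one_mul, smul_smul] at this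
    rw [← sub_eq_zero, ← this]
    module
  have hconj : bGen n * (tGen n * (bGen n * tGen n)) = tGen n * (bGen n * tGen n) * tGen n := by
    rw [← braid n]; simp only [mul_assoc]; rw [← braid n]
  set a := tGen n
  set b := bGen n
  have hbconj : b = (a * (b * a)) * a * (a * (b * a))⁻¹ := by
    rw [← hconj, mul_inv_cancel_right]
  have hBq : ρ b * ρ b = (z + z') • ρ b - (z * z') • 1 := by
    set c := a * (b * a)
    have hc : ρ c * ρ c⁻¹ = 1 := by rw [← map_mul]; simp
    have hc' : ρ c⁻¹ * ρ c = 1 := by rw [← map_mul]; simp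
    have e : ρ b = ρ c * ρ a * ρ c⁻¹ := by rw [← map_mul, ← map_mul, ← hbconj]
    rw [e]
    calc ρ c * ρ a * ρ c⁻¹ * (ρ c * ρ a * ρ c⁻¹)
        = ρ c * ρ a * (ρ c⁻¹ * ρ c) * ρ a * ρ c⁻¹ := by simp only [mul_assoc]
      _ = ρ c * (ρ a * ρ a) * ρ c⁻¹ := by rw [hc', mul_one]; simp only [mul_assoc]
      _ = _ := by
        rw [hAq]
        simp only [mul_sub, sub_mul, mul_smul_comm, smul_mul_assoc, mul_one, hc]
  have hbr : ρ b * (ρ a * ρ b) = ρ a * (ρ b * ρ a) := by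
    rw [← map_mul, ← map_mul, ← map_mul, ← map_mul, braid n]
  have hAB : ρ a ≠ ρ b := by
    intro hab
    let H : Subgroup (SL2 n) :=
      { carrier := {g | Commute (ρ g) (ρ a)}
        one_mem' := by simp
        mul_mem' := by
          intro x y hx hy
          simp only [Set.mem_setOf_eq, map_mul] at *
          exact hx.mul_left hy
        inv_mem' := by
          intro x hx
          simp only [Set.mem_setOf_eq] at *
          have h1 : ρ x⁻¹ * ρ x = 1 := by rw [← map_mul]; simp
          have h2 : ρ x * ρ x⁻¹ = 1 := by rw [← map_mul]; simp
          calc ρ x⁻¹ * ρ a = ρ x⁻¹ * (ρ a * ρ x) * ρ x⁻¹ := by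
                rw [mul_assoc, mul_assoc, h2, mul_one]
            _ = ρ x⁻¹ * (ρ x * ρ a) * ρ x⁻¹ := by rw [hx.eq]
            _ = ρ a * ρ x⁻¹ := by rw [← mul_assoc, h1, one_mul] }
    have hall : ∀ g, Commute (ρ g) (ρ a) :=
      fun g => gen_top n H (Commute.refl _) (by change Commute (ρ b) (ρ a); rw [hab]) g
    have hinv : ∀ g, (Module.End.eigenspace (ρ a) z).map (ρ g) ≤ Module.End.eigenspace (ρ a) z := by
      intro g
      rintro _ ⟨v, hv, rfl⟩
      have hv' : ρ a v = z • v := Module.End.mem_eigenspace_iff.1 hv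
      rw [Module.End.mem_eigenspace_iff]
      have := LinearMap.congr_fun (hall g).eq v
      simp only [Module.End.mul_apply] at this
      rw [← this, hv', map_smul]
    rcases hirr.2 _ hinv with h | h
    · exact hz h
    · obtain ⟨v, hv⟩ := hz'.exists_hasEigenvector
      have h1 : ρ a v = z • v := Module.End.mem_eigenspace_iff.1 (h ▸ Submodule.mem_top)
      have h2 : ρ a v = z' • v := hv.apply_eq_smul
      have h3 : (z - z') • v = 0 := by rw [sub_smul, ← h1, ← h2, sub_self]
      rcases smul_eq_zero.1 h3 with h | h
      · exact hne (sub_eq_zero.1 h)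
      · exact hv.2 h
  -- eigenvalue of `ρ (a b⁻¹)` different from one
  obtain ⟨w, hw, hw1⟩ : ∃ w, Module.End.HasEigenvalue (ρ (a * b⁻¹)) w ∧ w ≠ 1 := by
    by_contra! hcon
    have := aeval_zero_of_spectrum (ρ (a * b⁻¹)) hN (hpow _)
      (Polynomial.X - Polynomial.C 1) (Polynomial.X_sub_C_ne_zero _) (by
        intro x hx; simp [hcon x hx])
    simp only [map_sub, Polynomial.aeval_X, map_one, sub_eq_zero] at this
    apply hAB
    have e : a = a * b⁻¹ * b := by simp
    rw [e, map_mul, this, one_mul]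
  have hwN := heigpow _ _ hw
  have hw0 : w ≠ 0 := by rintro rfl; simp [hN.ne'] at hwN
  have hY : (z * z') • ρ (a * b⁻¹) = (z + z') • ρ a - ρ a * ρ b := by
    have h1 : ρ b * ρ b⁻¹ = 1 := by rw [← map_mul]; simp
    have h2 : (z * z') • ρ b⁻¹ = (z + z') • 1 - ρ b := by
      have := congrArg (· * ρ b⁻¹) hBq
      simp only [sub_mul, smul_mul_assoc, mul_assoc, h1, mul_one, one_mul] at this
      rw [this]; module
    rw [map_mul, ← mul_smul_comm, h2, mul_sub, mul_smul_comm, mul_one]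
  have hid := hecke_identity (ρ a) (ρ b) (z + z') (z * z') hAq hBq hbr _ hY
  obtain ⟨v, hv⟩ := hw.exists_hasEigenvector
  have hv1 : ρ (a * b⁻¹) v = w • v := hv.apply_eq_smul
  have hid2 := LinearMap.congr_fun hid v
  simp only [LinearMap.sub_apply, LinearMap.add_apply, LinearMap.smul_apply, Module.End.mul_apply,
    hv1, map_smul, smul_smul, Module.End.one_apply, LinearMap.zero_apply, ← sub_smul,
    ← add_smul] at hid2
  have hs := (smul_eq_zero.1 hid2).resolve_right hv.2
  have hfac : (z * z') ^ 2 * (w - 1) *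
      (z * z' * w ^ 2 - (z ^ 2 + z * z' + z' ^ 2) * w + z * z') = 0 := by
    have : (z * z') * ((z * z') ^ 2 * (w - 1) *
      (z * z' * w ^ 2 - (z ^ 2 + z * z' + z' ^ 2) * w + z * z')) = 0 := by
      linear_combination (z * z') * hs
    exact (mul_eq_zero.1 this).resolve_left (mul_ne_zero hz0 hz0')
  have hq := (mul_eq_zero.1 hfac).resolve_left
    (mul_ne_zero (pow_ne_zero _ (mul_ne_zero hz0 hz0')) (sub_ne_zero.2 hw1))
  refine order_lemma hN (r := z' * z⁻¹) (w := w) ?_ hwN ?_ hw1 ?_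
  · rw [mul_pow, inv_pow, hzN, hzN']; simp
  · intro h
    apply hne
    field_simp at h
    exact h.symm
  · field_simp
    linear_combination -hq
end

section
/- Every irreducible finite-dimensional complex representation ρ of SL(2, ℤ/9ℤ) that does not factor through the reduction homomorphism SL(2, ℤ/9ℤ) → SL(2, ℤ/3ℤ) has at least four distinct eigenvalues of ρ(t). -/
def mk9 (a b c d : ZMod 9) (h : a * d - b * c = 1) : SL2 9 :=
  ⟨!![a, b; c, d], by rw [Matrix.det_fin_two_of, h]⟩

lemma mk9_mul (a b c d h a' b' c' d' h') : mk9 a b c d h * mk9 a' b' c' d' h' =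
    mk9 (a*a'+b*c') (a*b'+b*d') (c*a'+d*c') (c*b'+d*d')
      (by linear_combination (a'*d'-b'*c') * h + h') := by
  apply Subtype.ext
  exact Matrix.mul_fin_two a b c d a' b' c' d'

lemma mk9_ext {a b c d h a' b' c' d' h'} (ha : a = a') (hb : b = b') (hc : c = c') (hd : d = d') :
    mk9 a b c d h = mk9 a' b' c' d' h' := by
  subst ha hb hc hd; rfl

lemma exists_mk9 (g : SL2 9) : ∃ a b c d h, g = mk9 a b c d h := by
  refine ⟨g.1 0 0, g.1 0 1, g.1 1 0, g.1 1 1, ?_, ?_⟩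
  · rw [← Matrix.det_fin_two]; exact g.2
  · apply Subtype.ext
    exact Matrix.eta_fin_two g.1

lemma mk9_one : mk9 1 0 0 1 (by decide) = 1 := by
  apply Subtype.ext
  exact Matrix.one_fin_two.symm

lemma tGen_eq : tGen 9 = mk9 1 1 0 1 (by decide) := rfl

lemma tGen_pow_three : tGen 9 ^ 3 = mk9 1 3 0 1 (by decide) := by
  rw [tGen_eq, pow_three, mk9_mul, mk9_mul]
  exact mk9_ext (by decide) (by decide) (by decide) (by decide)

lemma tGen_pow_nine : tGen 9 ^ 9 = 1 := by
  rw [show 9 = 3 * 3 from rfl, pow_mul, tGen_pow_three, pow_three, mk9_mul, mk9_mul, ← mk9_one]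
  exact mk9_ext (by decide) (by decide) (by decide) (by decide)

/-- conjugates of `t ^ 3` act as the same scalar -/
lemma conj_scalar {V : Type} [AddCommGroup V] [Module ℂ V] (ρ : Representation ℂ (SL2 9) V)
    {c : ℂ} {u : SL2 9} (hc : ρ u = algebraMap ℂ _ c) (x g : SL2 9) (h : x * g = g * u) :
    ρ x = algebraMap ℂ _ c := by
  have : x = g * u * g⁻¹ := by rw [← h]; group
  rw [this, map_mul, map_mul, hc, ← Algebra.commutes, mul_assoc, ← map_mul]
  simp

lemma ker_elem (a b c d : ZMod 9) (h : a * d - b * c = 1)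
    (ha : ZMod.castHom (by norm_num : (3:ℕ) ∣ 9) (ZMod 3) a = 1)
    (hb : ZMod.castHom (by norm_num : (3:ℕ) ∣ 9) (ZMod 3) b = 0)
    (hc : ZMod.castHom (by norm_num : (3:ℕ) ∣ 9) (ZMod 3) c = 0)
    (hd : ZMod.castHom (by norm_num : (3:ℕ) ∣ 9) (ZMod 3) d = 1) :
    ∃ x y z : ZMod 9, a = 1 + 3 * x ∧ b = 3 * y ∧ c = 3 * z ∧ d = 1 - 3 * x := by
  have h1 : ∀ a : ZMod 9, ZMod.castHom (by norm_num : (3:ℕ) ∣ 9) (ZMod 3) a = 1 →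
    ∃ x : ZMod 9, a = 1 + 3 * x := by decide
  have h2 : ∀ a : ZMod 9, ZMod.castHom (by norm_num : (3:ℕ) ∣ 9) (ZMod 3) a = 0 →
    ∃ x : ZMod 9, a = 3 * x := by decide
  obtain ⟨x, rfl⟩ := h1 a ha
  obtain ⟨y, rfl⟩ := h2 b hb
  obtain ⟨z, rfl⟩ := h2 c hc
  obtain ⟨w, rfl⟩ := h1 d hd
  have h9 : (9 : ZMod 9) = 0 := by decide
  refine ⟨x, y, z, rfl, rfl, rfl, ?_⟩
  linear_combination h + (y * z - x * w) * h9

/-- powers inside the congruence kernel -/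
lemma kpow (x y z : ZMod 9) (h) (n : ℕ) (h') : (mk9 (1 + 3*x) (3*y) (3*z) (1-3*x) h) ^ n =
    mk9 (1+3*(n*x)) (3*(n*y)) (3*(n*z)) (1-3*(n*x)) h' := by
  have h9 : (9 : ZMod 9) = 0 := by decide
  induction n with
  | zero => rw [pow_zero, ← mk9_one]; exact mk9_ext (by simp) (by simp) (by simp) (by simp)
  | succ n ih =>
    rw [pow_succ, ih (by linear_combination (-n*x*n*x - n*y*n*z) * h9), mk9_mul]
    push_cast
    refine mk9_ext ?_ ?_ ?_ ?_
    · linear_combination (n * x*x + n*y*z) * h9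
    · linear_combination (0) * h9
    · linear_combination (0) * h9
    · linear_combination (n * x*x + n*y*z) * h9

lemma ker_trivial {V : Type} [AddCommGroup V] [Module ℂ V] (ρ : Representation ℂ (SL2 9) V)
    (h3 : ρ (tGen 9 ^ 3) = 1) (g : SL2 9)
    (hg : Matrix.SpecialLinearGroup.map
        (ZMod.castHom (by norm_num : (3:ℕ) ∣ 9) (ZMod 3)) g = 1) : ρ g = 1 := by
  have h9 : (9 : ZMod 9) = 0 := by decide
  obtain ⟨a, b, c, d, h, rfl⟩ := exists_mk9 g
  have e : ∀ i j, _ := fun i j => congrFun (congrFun (congrArg Subtype.val hg) i) j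
  obtain ⟨x, y, z, rfl, rfl, rfl, rfl⟩ := ker_elem a b c d h
    (e 0 0) (e 0 1) (e 1 0) (e 1 1)
  have hs := tGen_pow_three ▸ h3
  have hs' : ρ (mk9 1 3 0 1 (by decide)) = algebraMap ℂ _ 1 := by rw [hs, map_one]
  have k1 := conj_scalar ρ hs' (mk9 (1+3*0) (3*1) (3*0) (1-3*0) (by decide)) 1
    (by rw [mul_one, one_mul]; exact mk9_ext (by decide) (by decide) (by decide) (by decide))
  have k2 := conj_scalar ρ hs' (mk9 (1+3*0) (3*0) (3*(-1)) (1-3*0) (by decide))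
    (mk9 0 (-1) 1 0 (by decide))
    (by rw [mk9_mul, mk9_mul]; exact mk9_ext (by decide) (by decide) (by decide) (by decide))
  have k3 := conj_scalar ρ hs' (mk9 (1+3*(-1)) (3*1) (3*(-1)) (1-3*(-1)) (by decide))
    (mk9 1 0 1 1 (by decide))
    (by rw [mk9_mul, mk9_mul]; exact mk9_ext (by decide) (by decide) (by decide) (by decide))
  rw [map_one] at k1 k2 k3
  have hx : ∀ x : ZMod 9, ((x.val : ℕ) : ZMod 9) = x := fun x => ZMod.natCast_zmod_val x
  have key : mk9 (1+3*x) (3*y) (3*z) (1-3*x) h =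
      (mk9 (1+3*(-1)) (3*1) (3*(-1)) (1-3*(-1)) (by decide)) ^ (-x).val *
      ((mk9 (1+3*0) (3*1) (3*0) (1-3*0) (by decide)) ^ (y + x).val *
      (mk9 (1+3*0) (3*0) (3*(-1)) (1-3*0) (by decide)) ^ (x-z).val) := by
    rw [kpow _ _ _ _ _ (by simp only [hx]; linear_combination (-x*x+x*x) * h9),
      kpow _ _ _ _ _ (by simp only [hx]; ring), 
      kpow _ _ _ _ _ (by simp only [hx]; ring), mk9_mul, mk9_mul]
    simp only [hx]
    refine mk9_ext ?_ ?_ ?_ ?_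
    · linear_combination ((1+3*x)*(y+x)*(x-z) - x*(x-z)) * h9
    · linear_combination (-x*(y+x)) * h9
    · linear_combination (3*x*(y+x)*(x-z) - x*(x-z)) * h9
    · linear_combination (-x*(y+x)) * h9
  rw [key, map_mul, map_mul, map_pow, map_pow, map_pow, k1, k2, k3]
  simp

lemma scalar_one {V : Type} [AddCommGroup V] [Module ℂ V] [Nontrivial V]
    (ρ : Representation ℂ (SL2 9) V)
    (c : ℂ) (hc3 : c ^ 3 = 1) (hs : ρ (tGen 9) ^ 3 = algebraMap ℂ _ c) : c = 1 := by
  rw [← map_pow, tGen_pow_three] at hs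
  have k2 := conj_scalar ρ hs (mk9 1 0 (-3) 1 (by decide))
    (mk9 0 (-1) 1 0 (by decide))
    (by rw [mk9_mul, mk9_mul]; exact mk9_ext (by decide) (by decide) (by decide) (by decide))
  have k3 := conj_scalar ρ hs (mk9 (-2) 3 (-3) 4 (by decide))
    (mk9 1 0 1 1 (by decide))
    (by rw [mk9_mul, mk9_mul]; exact mk9_ext (by decide) (by decide) (by decide) (by decide))
  have k4 := conj_scalar ρ hs (mk9 4 3 (-3) (-2) (by decide))
    (mk9 1 0 2 1 (by decide))
    (by rw [mk9_mul, mk9_mul]; exact mk9_ext (by decide) (by decide) (by decide) (by decide))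
  have key : mk9 1 3 0 1 (by decide) * (mk9 1 0 (-3) 1 (by decide) *
    (mk9 (-2) 3 (-3) 4 (by decide) * mk9 4 3 (-3) (-2) (by decide))) = 1 := by
    have e1 : mk9 (-2) 3 (-3) 4 (by decide) * mk9 4 3 (-3) (-2) (by decide) =
        mk9 1 6 3 1 (by decide) :=
      (mk9_mul ..).trans (mk9_ext (by decide) (by decide) (by decide) (by decide))
    have e2 : mk9 1 0 (-3) 1 (by decide) * mk9 1 6 3 1 (by decide) =
        mk9 1 6 0 1 (by decide) :=
      (mk9_mul ..).trans (mk9_ext (by decide) (by decide) (by decide) (by decide))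
    rw [e1, e2]
    exact ((mk9_mul ..).trans (mk9_ext (by decide) (by decide) (by decide) (by decide))).trans mk9_one
  have := congrArg ρ key
  rw [map_mul, map_mul, map_mul, hs, k2, k3, k4, map_one] at this
  obtain ⟨v, hv⟩ := exists_ne (0 : V)
  have hv4 := LinearMap.congr_fun this v
  simp only [Module.End.mul_apply, Module.algebraMap_end_apply, Module.End.one_apply,
    smul_smul] at hv4
  have h4 : c * (c * (c * c)) = 1 := by
    apply smul_left_injective ℂ hv
    simpa [mul_assoc] using hv4
  linear_combination h4 - c * hc3

lemma not_scalar {V : Type} [AddCommGroup V] [Module ℂ V] [Nontrivial V]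
    (ρ : Representation ℂ (SL2 9) V)
    (hnf : ¬ ∃ ρ' : Representation ℂ (SL2 3) V,
      ρ = ρ'.comp (Matrix.SpecialLinearGroup.map
        (ZMod.castHom (by norm_num : (3:ℕ) ∣ 9) (ZMod 3))))
    (c : ℂ) (hc3 : c ^ 3 = 1) : ρ (tGen 9) ^ 3 ≠ algebraMap ℂ _ c := by
  intro hs
  obtain rfl := scalar_one ρ c hc3 hs
  apply hnf
  rw [map_one, ← map_pow] at hs
  set π := Matrix.SpecialLinearGroup.map (n := Fin 2)
        (ZMod.castHom (by norm_num : (3:ℕ) ∣ 9) (ZMod 3)) with hπ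
  have hker : ∀ g h, π g = π h → ρ g = ρ h := by
    intro g h hgh
    have := ker_trivial ρ hs (g * h⁻¹) (by
      rw [← hπ, map_mul, hgh, ← map_mul, mul_inv_cancel, map_one])
    calc ρ g = ρ (g * h⁻¹ * h) := by group
      _ = ρ h := by rw [map_mul, this, one_mul]
  have hsurj : Function.Surjective π := by
    intro m
    have h1 : ∀ a b c d : ZMod 3, a * d - b * c = 1 →
      ∃ a' : ZMod 9, ZMod.castHom (by norm_num : (3:ℕ) ∣ 9) (ZMod 3) a' = a ∧
      ∃ b' : ZMod 9, ZMod.castHom (by norm_num : (3:ℕ) ∣ 9) (ZMod 3) b' = b ∧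
      ∃ c' : ZMod 9, ZMod.castHom (by norm_num : (3:ℕ) ∣ 9) (ZMod 3) c' = c ∧
      ∃ d' : ZMod 9, ZMod.castHom (by norm_num : (3:ℕ) ∣ 9) (ZMod 3) d' = d ∧
        a' * d' - b' * c' = 1 := by
      decide
    obtain ⟨a, ha, b, hb, c, hc, d, hd, h⟩ := h1 (m.1 0 0) (m.1 0 1) (m.1 1 0) (m.1 1 1)
      (by rw [← Matrix.det_fin_two]; exact m.2)
    refine ⟨mk9 a b c d h, ?_⟩
    apply Subtype.ext
    ext i j
    fin_cases i <;> fin_cases j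
    · exact ha
    · exact hb
    · exact hc
    · exact hd
  refine ⟨{ toFun := fun x => ρ (Function.surjInv hsurj x)
            map_one' := ?_
            map_mul' := ?_ }, ?_⟩
  · rw [← map_one ρ]
    apply hker
    rw [Function.surjInv_eq hsurj, map_one]
  · intro x y
    rw [← map_mul ρ]
    apply hker
    rw [map_mul]
    simp only [Function.surjInv_eq hsurj]
  · apply MonoidHom.ext
    intro g
    apply hker
    exact (Function.surjInv_eq hsurj (π g)).symm

lemma exists_spec {V : Type} [AddCommGroup V] [Module ℂ V] [Nontrivial V] [FiniteDimensional ℂ V]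
    (T : Module.End ℂ V) (h9 : T ^ 9 = 1) (c : ℂ) (hc : c ^ 3 = 1)
    (h : T ^ 3 ≠ algebraMap ℂ _ c) : ∃ l ∈ spectrum ℂ T, l ^ 3 ≠ c := by
  by_contra! H
  apply h
  let p : Polynomial ℂ := .X ^ 6 + .C c * .X ^ 3 + .C (c^2)
  have hne : (spectrum ℂ T).Nonempty := spectrum.nonempty_of_isAlgClosed_of_finiteDimensional ℂ T
  have hu : IsUnit (Polynomial.aeval T p) := by
    rw [← spectrum.zero_notMem_iff ℂ]
    intro h0
    rw [spectrum.map_polynomial_aeval_of_nonempty T p hne] at h0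
    obtain ⟨l, hl, h0⟩ := h0
    have h3 := H l hl
    simp only [p, Polynomial.eval_add, Polynomial.eval_mul, Polynomial.eval_pow, 
      Polynomial.eval_X, Polynomial.eval_C] at h0
    rw [show l ^ 6 = (l^3)^2 by ring, h3] at h0
    have : c ^ 2 = 0 := by linear_combination h0 / 3
    have : c = 0 := by simpa using this
    simp [this] at hc
  have hp : (Polynomial.X ^ 3 - Polynomial.C c) * p = Polynomial.X ^ 9 - Polynomial.C (c^3) := by
    simp only [p, map_pow]; ring
  have := congrArg (Polynomial.aeval T) hp
  rw [map_mul, hc] at this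
  rw [← sub_eq_zero, ← hu.mul_left_eq_zero]
  simpa [h9] using this

lemma spec_closed {V : Type} [AddCommGroup V] [Module ℂ V] [FiniteDimensional ℂ V]
    (ρ : Representation ℂ (SL2 9) V) (l : ℂ) (hl : l ∈ spectrum ℂ (ρ (tGen 9))) :
    l ^ 7 ∈ spectrum ℂ (ρ (tGen 9)) := by
  rw [← Module.End.hasEigenvalue_iff_mem_spectrum] at hl ⊢
  obtain ⟨v, hv⟩ := hl.exists_hasEigenvector
  have hg : tGen 9 * mk9 7 0 0 4 (by decide) = mk9 7 0 0 4 (by decide) * tGen 9 ^ 7 := by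
    rw [show 7 = 3 + (3 + 1) from rfl, pow_add, pow_add, pow_one, tGen_pow_three, tGen_eq,
      mk9_mul, mk9_mul, mk9_mul, mk9_mul]
    exact mk9_ext (by decide) (by decide) (by decide) (by decide)
  have hpow : (ρ (tGen 9) ^ 7) v = l ^ 7 • v := hv.pow_apply 7
  apply Module.End.hasEigenvalue_of_hasEigenvector (x := ρ (mk9 7 0 0 4 (by decide)) v)
  rw [Module.End.hasEigenvector_iff, Module.End.mem_eigenspace_iff]
  constructor
  · rw [← Module.End.mul_apply, ← map_mul, hg, map_mul, Module.End.mul_apply, map_pow, hpow,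
      map_smul]
  · intro h0
    apply hv.2
    have : ρ ((mk9 7 0 0 4 (by decide))⁻¹ * mk9 7 0 0 4 (by decide)) v = 0 := by
      rw [map_mul, Module.End.mul_apply, h0, map_zero]
    simpa using this

/-- Every irreducible finite-dimensional complex representation of `SL(2, ℤ/9ℤ)` that does
not factor through the reduction homomorphism `SL(2, ℤ/9ℤ) → SL(2, ℤ/3ℤ)` has at least four
distinct eigenvalues of `ρ(t)`. -/
theorem stmt6
    (V : Type) [AddCommGroup V] [Module ℂ V] [FiniteDimensional ℂ V]
    (ρ : Representation ℂ (SL2 9) V)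
    (hirr : IsIrreducibleRep ρ)
    (hnf : ¬ ∃ ρ' : Representation ℂ (SL2 3) V,
      ρ = ρ'.comp (Matrix.SpecialLinearGroup.map
        (ZMod.castHom (by norm_num : (3:ℕ) ∣ 9) (ZMod 3)))) :
    4 ≤ (spectrum ℂ (ρ (tGen 9))).ncard := by
  have := hirr.1
  have h9 : ρ (tGen 9) ^ 9 = 1 := by rw [← map_pow, tGen_pow_nine, map_one]
  have hs9 : ∀ l ∈ spectrum ℂ (ρ (tGen 9)), l ^ 9 = 1 := by
    intro l hl
    have := spectrum.pow_mem_pow (ρ (tGen 9)) 9 hl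
    rw [h9, spectrum.one_eq] at this
    exact this
  obtain ⟨l, hl, hl3⟩ := exists_spec _ h9 1 (by norm_num) (not_scalar ρ hnf 1 (by norm_num))
  have hl9 := hs9 l hl
  have hl33 : (l ^ 3) ^ 3 = 1 := by rw [← pow_mul]; exact hl9
  obtain ⟨m, hm, hm3⟩ := exists_spec _ h9 (l^3) hl33 (not_scalar ρ hnf _ hl33)
  have h7 := spec_closed ρ l hl
  have h4 := spec_closed ρ _ h7
  have e4 : (l ^ 7) ^ 7 = l ^ 4 := by
    linear_combination (l^4) * (l^36 + l^27 + l^18 + l^9 + 1) * hl9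
  rw [e4] at h4
  have hl0 : l ≠ 0 := by rintro rfl; norm_num at hl9
  have n1 : l ≠ l ^ 4 := fun h => hl3 (mul_left_cancel₀ hl0 (by linear_combination -h))
  have n2 : l ^ 4 ≠ l ^ 7 := fun h =>
    hl3 (mul_left_cancel₀ (pow_ne_zero 4 hl0) (by linear_combination -h))
  have n3 : l ≠ l ^ 7 := fun h => hl3 (mul_left_cancel₀ (pow_ne_zero 7 hl0)
    (by linear_combination l * hl9 + h))
  have m1 : m ≠ l := by rintro rfl; exact hm3 rfl
  have m4 : m ≠ l ^ 4 := by rintro rfl; apply hm3; linear_combination l^3 * hl9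
  have m7 : m ≠ l ^ 7 := by rintro rfl; apply hm3; linear_combination (l^12 + l^3) * hl9
  have hsub : (({m, l, l ^ 4, l ^ 7} : Finset ℂ) : Set ℂ) ⊆ spectrum ℂ (ρ (tGen 9)) := by
    intro x hx
    simp only [Finset.coe_insert, Finset.coe_singleton, Set.mem_insert_iff,
      Set.mem_singleton_iff] at hx
    rcases hx with rfl | rfl | rfl | rfl <;> assumption
  have hcard : ({m, l, l ^ 4, l ^ 7} : Finset ℂ).card = 4 := by
    rw [Finset.card_insert_of_notMem, Finset.card_insert_of_notMem, Finset.card_pair n2]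
    · simp [n1, n3]
    · simp [m1, m4, m7]
  rw [← hcard, ← Set.ncard_coe_finset]
  exact Set.ncard_le_ncard hsub (Module.End.finite_spectrum _)
end

section
/- Up to isomorphism, SL(2, ℤ/5ℤ) has exactly four nontrivial irreducible finite-dimensional complex representations ρ for which ρ(t) has at most three distinct eigenvalues: two of dimension 2, with eigenvalue sets of ρ(t) equal to {ζ₅, ζ₅⁴} and {ζ₅², ζ₅³}, and two of dimension 3, with eigenvalue sets of ρ(t) equal to {1, ζ₅, ζ₅⁴} and {1, ζ₅², ζ₅³}. -/
/-- The primitive `m`-th root of unity `ζ_m = exp(2πi/m)`. -/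
noncomputable def ζ (m : ℕ) : ℂ := Complex.exp (2 * Real.pi * Complex.I / m)

/-- A representation is nontrivial if some group element acts nontrivially. -/
def IsNontrivialRep {G V : Type} [Group G] [AddCommGroup V] [Module ℂ V]
    (ρ : Representation ℂ G V) : Prop :=
  ∃ g : G, ρ g ≠ LinearMap.id

/-- Two representations are isomorphic if there is an equivariant linear equivalence. -/
def RepIso {G V W : Type} [Group G] [AddCommGroup V] [Module ℂ V]
    [AddCommGroup W] [Module ℂ W]
    (ρ : Representation ℂ G V) (ρ' : Representation ℂ G W) : Prop :=
  ∃ e : V ≃ₗ[ℂ] W, ∀ (g : G) (v : V), e (ρ g v) = ρ' g (e v)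


namespace SL25

/-- Model of `ℤ[z]/(z^4+z^3+z^2+z+1)`. -/
abbrev R5 := ℤ × ℤ × ℤ × ℤ

def rmul (x y : R5) : R5 :=
  let c4 := x.2.1 * y.2.2.2 + x.2.2.1 * y.2.2.1 + x.2.2.2 * y.2.1
  let c5 := x.2.2.1 * y.2.2.2 + x.2.2.2 * y.2.2.1
  let c6 := x.2.2.2 * y.2.2.2
  (x.1 * y.1 - c4 + c5,
   x.1 * y.2.1 + x.2.1 * y.1 - c4 + c6,
   x.1 * y.2.2.1 + x.2.1 * y.2.1 + x.2.2.1 * y.1 - c4,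
   x.1 * y.2.2.2 + x.2.1 * y.2.2.1 + x.2.2.1 * y.2.1 + x.2.2.2 * y.1 - c4)

def radd (x y : R5) : R5 :=
  (x.1 + y.1, x.2.1 + y.2.1, x.2.2.1 + y.2.2.1, x.2.2.2 + y.2.2.2)

/-- 2×2 matrices over the model. -/
abbrev M5 := R5 × R5 × R5 × R5

def mmul (x y : M5) : M5 :=
  (radd (rmul x.1 y.1) (rmul x.2.1 y.2.2.1), radd (rmul x.1 y.2.1) (rmul x.2.1 y.2.2.2),
   radd (rmul x.2.2.1 y.1) (rmul x.2.2.2 y.2.2.1),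
   radd (rmul x.2.2.1 y.2.1) (rmul x.2.2.2 y.2.2.2))

def mone : M5 := ((1,0,0,0), (0,0,0,0), (0,0,0,0), (1,0,0,0))
/-- image of `t` -/
def mA : M5 := ((-1,-1,-1,-1), (0,1,0,0), (0,0,0,0), (0,1,0,0))
/-- image of `[[1,0],[-1,1]]` -/
def mB : M5 := ((0,1,0,0), (0,0,0,0), (1,1,1,1), (-1,-1,-1,-1))

def mpow (x : M5) : ℕ → M5
  | 0 => mone
  | n + 1 => mmul (mpow x n) x

def F0 (a c d : ZMod 5) : M5 :=
  mmul (mmul (mpow mA ((a - 1) * c ^ 3).val) (mpow mB (-c).val)) (mpow mA ((d - 1) * c ^ 3).val)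

def F (a b c d : ZMod 5) : M5 :=
  if c = 0 then mmul (F0 (a + b) (c + d) d) mB else F0 a c d

set_option synthInstance.maxSize 100000
set_option synthInstance.maxHeartbeats 400000
instance : DecidableEq M5 := inferInstance

lemma F_one : F 1 0 0 1 = mone := by decide +kernel

lemma F_A : ∀ a b c d : ZMod 5, a * d - b * c = 1 →
    F a (a + b) c (c + d) = mmul (F a b c d) mA := by decide +kernel

lemma F_B : ∀ a b c d : ZMod 5, a * d - b * c = 1 →
    F (a - b) b (c - d) d = mmul (F a b c d) mB := by decide +kernel

/-- Evaluation. -/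
noncomputable def rev (z : ℂ) (x : R5) : ℂ := x.1 + x.2.1 * z + x.2.2.1 * z ^ 2 + x.2.2.2 * z ^ 3

noncomputable def mev (z : ℂ) (x : M5) : Matrix (Fin 2) (Fin 2) ℂ :=
  !![rev z x.1, rev z x.2.1; rev z x.2.2.1, rev z x.2.2.2]

lemma rev_mul (z : ℂ) (hz : z ^ 4 + z ^ 3 + z ^ 2 + z + 1 = 0) (x y : R5) :
    rev z (rmul x y) = rev z x * rev z y := by
  obtain ⟨a, b, c, d⟩ := x
  obtain ⟨a', b', c', d'⟩ := y
  simp only [rev, rmul]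
  push_cast
  linear_combination (-(b * d' + c * c' + d * b') - (c * d' + d * c') * (z - 1) - d * d' * (z ^ 2 - z)) * hz

lemma rev_add (z : ℂ) (x y : R5) :
    rev z (radd x y) = rev z x + rev z y := by
  simp only [rev, radd]
  push_cast
  ring

lemma mev_mul (z : ℂ) (hz : z ^ 4 + z ^ 3 + z ^ 2 + z + 1 = 0) (x y : M5) :
    mev z (mmul x y) = mev z x * mev z y := by
  simp only [mev, mmul, rev_add, rev_mul z hz, Matrix.mul_fin_two]

lemma mev_one (z : ℂ) : mev z mone = 1 := by
  simp [mev, mone, rev, Matrix.one_fin_two]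

lemma mev_A (z : ℂ) (hz : z ^ 4 + z ^ 3 + z ^ 2 + z + 1 = 0) :
    mev z mA = !![z ^ 4, z; 0, z] := by
  have : -1 - z - z ^ 2 - z ^ 3 = z ^ 4 := by linear_combination -hz
  simp [mev, mA, rev, ← this]
  ring

lemma mev_B (z : ℂ) (hz : z ^ 4 + z ^ 3 + z ^ 2 + z + 1 = 0) :
    mev z mB = !![z, 0; -z ^ 4, z ^ 4] := by
  have : -1 - z - z ^ 2 - z ^ 3 = z ^ 4 := by linear_combination -hz
  simp [mev, mB, rev, ← this]
  constructor <;> ring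

def lGen : SL2 5 := ⟨!![1, 0; -1, 1], by simp [Matrix.det_fin_two_of]⟩
def sGen : SL2 5 := ⟨!![0, 1; -1, 0], by simp [Matrix.det_fin_two_of]⟩
def hGen : SL2 5 := ⟨!![2, 0; 0, 3], by simp [Matrix.det_fin_two_of]; decide⟩

lemma tpow (n : ℕ) : ((tGen 5 ^ n : SL2 5) : Matrix (Fin 2) (Fin 2) (ZMod 5)) = !![1, (n : ZMod 5); 0, 1] := by
  induction n with
  | zero => simp [Matrix.one_fin_two]
  | succ n ih =>
    rw [pow_succ, Matrix.SpecialLinearGroup.coe_mul, ih]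
    simp [tGen]; ring

lemma lpow (n : ℕ) : ((lGen ^ n : SL2 5) : Matrix (Fin 2) (Fin 2) (ZMod 5)) = !![1, 0; -(n : ZMod 5), 1] := by
  induction n with
  | zero => simp [Matrix.one_fin_two]
  | succ n ih =>
    rw [pow_succ, Matrix.SpecialLinearGroup.coe_mul, ih]
    simp [lGen]; ring

lemma gen_aux : ∀ a b c d : ZMod 5, a * d - b * c = 1 → c ≠ 0 →
    1 + (a - 1) * c ^ 3 * c = a ∧ (1 + (a - 1) * c ^ 3 * c) * ((d - 1) * c ^ 3) + (a - 1) * c ^ 3 = b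
     ∧ c * ((d - 1) * c ^ 3) + 1 = d := by decide +kernel

lemma gen_c (g : SL2 5) (hc : g 1 0 ≠ 0) : ∃ i j k : ℕ, g = tGen 5 ^ i * lGen ^ j * tGen 5 ^ k := by
  have hd := g.det_coe
  rw [Matrix.det_fin_two] at hd
  have := gen_aux _ _ _ _ hd hc
  refine ⟨((g 0 0 - 1) * g 1 0 ^ 3).val, (-g 1 0).val, ((g 1 1 - 1) * g 1 0 ^ 3).val, ?_⟩
  apply Subtype.ext
  simp only [Matrix.SpecialLinearGroup.coe_mul, tpow, lpow, ZMod.natCast_val, ZMod.cast_id', id, Matrix.mul_fin_two]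
  rw [Matrix.eta_fin_two (g : Matrix (Fin 2) (Fin 2) (ZMod 5))]
  obtain ⟨h1, h2, h3⟩ := this
  ext i j
  fin_cases i <;> fin_cases j <;> simp
  · linear_combination -h1
  · linear_combination -h2
  · linear_combination -h3

lemma gen_ind (P : SL2 5 → Prop) (h1 : P 1) (hm : ∀ g h, P g → P h → P (g * h))
    (ht : P (tGen 5)) (hl : P lGen) (g : SL2 5) : P g := by
  have pw : ∀ x, P x → ∀ n : ℕ, P (x ^ n) := by
    intro x hx n
    induction n with
    | zero => simpa using h1
    | succ n ih => rw [pow_succ]; exact hm _ _ ih hx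
  have key : ∀ g : SL2 5, g 1 0 ≠ 0 → P g := by
    intro g hc
    obtain ⟨i, j, k, rfl⟩ := gen_c g hc
    exact hm _ _ (hm _ _ (pw _ ht _) (pw _ hl _)) (pw _ ht _)
  by_cases hc : g 1 0 = 0
  · have h5 : lGen ^ 4 * lGen = 1 := by decide +kernel
    have : g = g * lGen ^ 4 * lGen := by rw [mul_assoc, h5, mul_one]
    rw [this]
    refine hm _ _ (key _ ?_) hl
    have hd := g.det_coe
    rw [Matrix.det_fin_two, hc] at hd
    rw [Matrix.SpecialLinearGroup.coe_mul, lpow]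
    simp [Matrix.mul_apply, Fin.sum_univ_two, hc]
    intro h4
    have h0 : ∀ x : ZMod 5, x * 4 = 0 → x = 0 := by decide
    rw [h0 _ h4] at hd
    rw [mul_zero, mul_zero, sub_zero] at hd
    exact absurd hd (by decide)
  · exact key g hc

lemma gen_ind' (P : SL2 5 → Prop) (h1 : P 1) (hm : ∀ g h, P g → P h → P (g * h))
    (ht : P (tGen 5)) (hs : P sGen) (g : SL2 5) : P g := by
  refine gen_ind P h1 hm ht ?_ g
  have : lGen = (tGen 5 * tGen 5 * (tGen 5 * tGen 5)) * sGen * (tGen 5 * tGen 5 * (tGen 5 * tGen 5)) := by decide +kernel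
  rw [this]
  have h4 := hm _ _ (hm _ _ ht ht) (hm _ _ ht ht)
  exact hm _ _ (hm _ _ h4 hs) h4

noncomputable def f2 (z : ℂ) (g : SL2 5) : Matrix (Fin 2) (Fin 2) ℂ :=
  mev z (F (g 0 0) (g 0 1) (g 1 0) (g 1 1))

lemma f2_mul_t (z : ℂ) (hz : z ^ 4 + z ^ 3 + z ^ 2 + z + 1 = 0) (g : SL2 5) :
    f2 z (g * tGen 5) = f2 z g * mev z mA := by
  have hd := g.det_coe
  rw [Matrix.det_fin_two] at hd
  rw [f2, f2, ← mev_mul z hz, ← F_A _ _ _ _ hd]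
  rw [Matrix.SpecialLinearGroup.coe_mul]
  simp [tGen, Matrix.mul_apply, Fin.sum_univ_two]

lemma f2_mul_l (z : ℂ) (hz : z ^ 4 + z ^ 3 + z ^ 2 + z + 1 = 0) (g : SL2 5) :
    f2 z (g * lGen) = f2 z g * mev z mB := by
  have hd := g.det_coe
  rw [Matrix.det_fin_two] at hd
  rw [f2, f2, ← mev_mul z hz, ← F_B _ _ _ _ hd]
  rw [Matrix.SpecialLinearGroup.coe_mul]
  simp [lGen, Matrix.mul_apply, Fin.sum_univ_two, sub_eq_add_neg]

lemma f2_one (z : ℂ) : f2 z 1 = 1 := by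
  rw [f2]
  simp [F_one, mev_one]

lemma f2_t (z : ℂ) (hz : z ^ 4 + z ^ 3 + z ^ 2 + z + 1 = 0) : f2 z (tGen 5) = !![z ^ 4, z; 0, z] := by
  rw [← mev_A z hz, ← one_mul (tGen 5), f2_mul_t z hz, f2_one, one_mul]

lemma f2_l (z : ℂ) (hz : z ^ 4 + z ^ 3 + z ^ 2 + z + 1 = 0) :
    f2 z lGen = !![z, 0; -z ^ 4, z ^ 4] := by
  rw [← mev_B z hz, ← one_mul lGen, f2_mul_l z hz, f2_one, one_mul]

lemma f2_mul (z : ℂ) (hz : z ^ 4 + z ^ 3 + z ^ 2 + z + 1 = 0) (g h : SL2 5) :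
    f2 z (g * h) = f2 z g * f2 z h := by
  revert g
  refine gen_ind (fun h => ∀ g, f2 z (g * h) = f2 z g * f2 z h) ?_ ?_ ?_ ?_ h
  · intro g; rw [f2_one, mul_one, mul_one]
  · intro h k hh hk g
    rw [← mul_assoc, hk, hh, hk, mul_assoc]
  · intro g; rw [f2_mul_t z hz, f2_t z hz, mev_A z hz]
  · intro g; rw [f2_mul_l z hz, f2_l z hz, mev_B z hz]

/-- The symmetric square of a 2×2 matrix. -/
def sq3 (m : Matrix (Fin 2) (Fin 2) ℂ) : Matrix (Fin 3) (Fin 3) ℂ :=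
  !![m 0 0 ^ 2, m 0 0 * m 0 1, m 0 1 ^ 2;
     2 * m 0 0 * m 1 0, m 0 0 * m 1 1 + m 0 1 * m 1 0, 2 * m 0 1 * m 1 1;
     m 1 0 ^ 2, m 1 0 * m 1 1, m 1 1 ^ 2]

lemma sq3_mul (m n : Matrix (Fin 2) (Fin 2) ℂ) : sq3 (m * n) = sq3 m * sq3 n := by
  ext i j
  fin_cases i <;> fin_cases j <;>
    simp [sq3, Matrix.mul_apply, Fin.sum_univ_two, Fin.sum_univ_three] <;> ring

lemma sq3_one : sq3 1 = 1 := by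
  ext i j
  fin_cases i <;> fin_cases j <;> simp [sq3]

noncomputable def rep2 (z : ℂ) (hz : z ^ 4 + z ^ 3 + z ^ 2 + z + 1 = 0) :
    Representation ℂ (SL2 5) (Fin 2 → ℂ) where
  toFun g := Matrix.toLin' (f2 z g)
  map_one' := by rw [f2_one, Matrix.toLin'_one]; rfl
  map_mul' g h := by rw [f2_mul z hz, Matrix.toLin'_mul]; rfl

noncomputable def rep3 (z : ℂ) (hz : z ^ 4 + z ^ 3 + z ^ 2 + z + 1 = 0) :
    Representation ℂ (SL2 5) (Fin 3 → ℂ) where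
  toFun g := Matrix.toLin' (sq3 (f2 z g))
  map_one' := by rw [f2_one, sq3_one, Matrix.toLin'_one]; rfl
  map_mul' g h := by rw [f2_mul z hz, sq3_mul, Matrix.toLin'_mul]; rfl

lemma rep2_apply (z : ℂ) (hz) (g : SL2 5) : rep2 z hz g = Matrix.toLin' (f2 z g) := rfl
lemma rep3_apply (z : ℂ) (hz) (g : SL2 5) : rep3 z hz g = Matrix.toLin' (sq3 (f2 z g)) := rfl

lemma rep2_t (z : ℂ) (hz) (x y : ℂ) : rep2 z hz (tGen 5) ![x, y] = ![z ^ 4 * x + z * y, z * y] := by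
  rw [rep2_apply, f2_t z hz]
  ext i; fin_cases i <;> simp [Matrix.mulVec, dotProduct, Fin.sum_univ_two]

lemma rep2_l (z : ℂ) (hz) (x y : ℂ) : rep2 z hz lGen ![x, y] = ![z * x, -z ^ 4 * x + z ^ 4 * y] := by
  rw [rep2_apply, f2_l z hz]
  ext i; fin_cases i <;> simp [Matrix.mulVec, dotProduct, Fin.sum_univ_two]

lemma rep3_t (z : ℂ) (hz : z ^ 4 + z ^ 3 + z ^ 2 + z + 1 = 0) (x y w : ℂ) : rep3 z hz (tGen 5) ![x, y, w] =
    ![z ^ 3 * x + y + z ^ 2 * w, y + 2 * z ^ 2 * w, z ^ 2 * w] := by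
  have h5 : z ^ 5 = 1 := by linear_combination (z - 1) * hz
  rw [rep3_apply, f2_t z hz]
  ext i; fin_cases i <;> simp [sq3, Matrix.mulVec, dotProduct, Fin.sum_univ_three]
  · linear_combination (z^3 * x + y) * h5
  · linear_combination (y) * h5

lemma rep3_l (z : ℂ) (hz : z ^ 4 + z ^ 3 + z ^ 2 + z + 1 = 0) (x y w : ℂ) : rep3 z hz lGen ![x, y, w] =
    ![z ^ 2 * x, -2 * x + y, z ^ 3 * x - z ^ 3 * y + z ^ 3 * w] := by
  have h5 : z ^ 5 = 1 := by linear_combination (z - 1) * hz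
  rw [rep3_apply, f2_l z hz]
  ext i; fin_cases i <;> simp [sq3, Matrix.mulVec, dotProduct, Fin.sum_univ_three]
  · linear_combination (- 2 * x + y) * h5
  · linear_combination (z^3 * (x - y + w)) * h5

end SL25

namespace SL25

lemma z5 {z : ℂ} (hz : z ^ 4 + z ^ 3 + z ^ 2 + z + 1 = 0) : z ^ 5 = 1 := by
  linear_combination (z - 1) * hz

lemma z0 {z : ℂ} (hz : z ^ 4 + z ^ 3 + z ^ 2 + z + 1 = 0) : z ≠ 0 := by
  rintro rfl
  norm_num at hz

lemma z1 {z : ℂ} (hz : z ^ 4 + z ^ 3 + z ^ 2 + z + 1 = 0) : z ≠ 1 := by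
  rintro rfl
  norm_num at hz

lemma sq_root {z : ℂ} (hz : z ^ 4 + z ^ 3 + z ^ 2 + z + 1 = 0) :
    (z ^ 2) ^ 4 + (z ^ 2) ^ 3 + (z ^ 2) ^ 2 + z ^ 2 + 1 = 0 := by
  linear_combination (z ^ 4 - z ^ 3 + z ^ 2 - z + 1) * hz

lemma schur {V W : Type} [AddCommGroup V] [Module ℂ V] [AddCommGroup W] [Module ℂ W]
    (ρ : Representation ℂ (SL2 5) W) (ρ' : Representation ℂ (SL2 5) V)
    (h : IsIrreducibleRep ρ) (h' : IsIrreducibleRep ρ') (Φ : V →ₗ[ℂ] W)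
    (hΦ : ∀ g x, Φ (ρ' g x) = ρ g (Φ x)) (h0 : Φ ≠ 0) : RepIso ρ ρ' := by
  have hk : LinearMap.ker Φ = ⊥ := by
    rcases h'.2 (LinearMap.ker Φ) (by
      rintro g _ ⟨x, hx, rfl⟩
      simp only [SetLike.mem_coe, LinearMap.mem_ker] at hx ⊢
      rw [hΦ, hx, map_zero]) with h1 | h1
    · exact h1
    · exact absurd (LinearMap.ker_eq_top.mp h1) h0
  have hr : LinearMap.range Φ = ⊤ := by
    rcases h.2 (LinearMap.range Φ) (by
      rintro g _ ⟨_, ⟨x, rfl⟩, rfl⟩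
      exact ⟨ρ' g x, hΦ g x⟩) with h1 | h1
    · exact absurd (LinearMap.range_eq_bot.mp h1) h0
    · exact h1
  let e := LinearEquiv.ofBijective Φ ⟨LinearMap.ker_eq_bot.mp hk, LinearMap.range_eq_top.mp hr⟩
  refine ⟨e.symm, fun g w => ?_⟩
  apply e.injective
  rw [LinearEquiv.apply_symm_apply]
  change _ = Φ _
  rw [hΦ]
  congr 1
  exact (e.apply_symm_apply w).symm

lemma comm_all {V W : Type} [AddCommGroup V] [Module ℂ V] [AddCommGroup W] [Module ℂ W]
    (ρ : Representation ℂ (SL2 5) W) (ρ' : Representation ℂ (SL2 5) V) (Φ : V →ₗ[ℂ] W)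
    (ht : ∀ x, Φ (ρ' (tGen 5) x) = ρ (tGen 5) (Φ x))
    (hl : (∀ x, Φ (ρ' lGen x) = ρ lGen (Φ x)) ∨ (∀ x, Φ (ρ' sGen x) = ρ sGen (Φ x))) :
    ∀ g x, Φ (ρ' g x) = ρ g (Φ x) := by
  have h1 : ∀ x, Φ (ρ' 1 x) = ρ 1 (Φ x) := by intro x; simp
  have hm : ∀ g h : SL2 5, (∀ x, Φ (ρ' g x) = ρ g (Φ x)) → (∀ x, Φ (ρ' h x) = ρ h (Φ x)) →
      ∀ x, Φ (ρ' (g * h) x) = ρ (g * h) (Φ x) := by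
    intro g h hg hh x
    simp [map_mul, hg, hh]
  rcases hl with hl | hl
  · exact gen_ind _ h1 hm ht hl
  · exact gen_ind' _ h1 hm ht hl

lemma inv_all {W : Type} [AddCommGroup W] [Module ℂ W]
    (ρ : Representation ℂ (SL2 5) W) (p : Submodule ℂ W)
    (ht : ∀ x ∈ p, ρ (tGen 5) x ∈ p)
    (hl : (∀ x ∈ p, ρ lGen x ∈ p) ∨ (∀ x ∈ p, ρ sGen x ∈ p)) :
    ∀ g, ∀ x ∈ p, ρ g x ∈ p := by
  have h1 : ∀ x ∈ p, ρ 1 x ∈ p := by intro x hx; simpa using hx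
  have hm : ∀ g h : SL2 5, (∀ x ∈ p, ρ g x ∈ p) → (∀ x ∈ p, ρ h x ∈ p) →
      ∀ x ∈ p, ρ (g * h) x ∈ p := by
    intro g h hg hh x hx
    simpa [map_mul] using hg _ (hh _ hx)
  rcases hl with hl | hl
  · exact gen_ind _ h1 hm ht hl
  · exact gen_ind' _ h1 hm ht hl

lemma inv_top {W : Type} [AddCommGroup W] [Module ℂ W]
    (ρ : Representation ℂ (SL2 5) W) (hirr : IsIrreducibleRep ρ) (p : Submodule ℂ W)
    (ht : ∀ x ∈ p, ρ (tGen 5) x ∈ p)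
    (hl : (∀ x ∈ p, ρ lGen x ∈ p) ∨ (∀ x ∈ p, ρ sGen x ∈ p))
    (v : W) (hv : v ≠ 0) (hvp : v ∈ p) : p = ⊤ := by
  rcases hirr.2 p (by
    rintro g _ ⟨x, hx, rfl⟩
    exact inv_all ρ p ht hl g x hx) with h | h
  · subst h
    exact absurd ((Submodule.mem_bot ℂ).mp hvp) hv
  · exact h

lemma irr2 (z : ℂ) (hz : z ^ 4 + z ^ 3 + z ^ 2 + z + 1 = 0) : IsIrreducibleRep (rep2 z hz) := by
  have h5 := z5 hz
  have hz0 := z0 hz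
  refine ⟨inferInstance, fun p hp => ?_⟩
  have hp' : ∀ g, ∀ x ∈ p, rep2 z hz g x ∈ p := fun g x hx => hp g ⟨x, hx, rfl⟩
  by_cases hb : p = ⊥
  · exact Or.inl hb
  right
  obtain ⟨x, hx, hx0⟩ := Submodule.exists_mem_ne_zero_of_ne_bot hb
  have top : ![(1 : ℂ), 0] ∈ p → ![(0 : ℂ), 1] ∈ p → p = ⊤ := by
    intro h1 h2
    rw [eq_top_iff]
    intro y _
    have : y = y 0 • ![(1 : ℂ), 0] + y 1 • ![(0 : ℂ), 1] := by
      ext i; fin_cases i <;> simp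
    rw [this]
    exact p.add_mem (p.smul_mem _ h1) (p.smul_mem _ h2)
  have e1 : ![(1 : ℂ), 0] ∈ p → p = ⊤ := by
    intro h1
    refine top h1 ?_
    have := p.smul_mem (-z) (p.sub_mem (hp' lGen _ h1) (p.smul_mem z h1))
    rw [rep2_l] at this
    convert this using 1
    ext i; fin_cases i <;> simp
    linear_combination -h5
  have e2 : ![(0 : ℂ), 1] ∈ p → p = ⊤ := by
    intro h1
    refine top ?_ h1
    have := p.smul_mem (z ^ 4) (p.sub_mem (hp' (tGen 5) _ h1) (p.smul_mem z h1))
    rw [rep2_t] at this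
    convert this using 1
    ext i; fin_cases i <;> simp
    linear_combination -h5
  obtain ⟨a, b, rfl⟩ : ∃ a b, x = ![a, b] := ⟨x 0, x 1, by ext i; fin_cases i <;> rfl⟩
  by_cases ha : (z ^ 4 - z) * a + z * b = 0
  · by_cases hb : -z ^ 4 * a + (z ^ 4 - z) * b = 0
    · exfalso
      apply hx0
      have hN : (z ^ 3 + z ^ 2 - 1) * (-2 - z ^ 2 - z ^ 3) = 1 := by
        linear_combination (-z ^ 2 - z + 1) * hz
      have ha0 : a = 0 := by
        have : (z ^ 3 + z ^ 2 - 1) * a = 0 := by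
          linear_combination (z ^ 4 - z) * ha - z * hb + (-z^3+1) *a * h5
        grind
      have hb0 : b = 0 := by
        rw [ha0] at ha
        simpa [hz0] using ha
      rw [ha0, hb0]
      ext i; fin_cases i <;> rfl
    · apply e2
      have := p.smul_mem (-z ^ 4 * a + (z ^ 4 - z) * b)⁻¹
        (p.sub_mem (hp' lGen _ hx) (p.smul_mem z hx))
      rw [rep2_l] at this
      convert this using 1
      ext i; fin_cases i <;> simp
      rw [eq_comm, inv_mul_eq_one₀ (by simpa using hb)]
      ring
  · apply e1
    have := p.smul_mem ((z ^ 4 - z) * a + z * b)⁻¹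
      (p.sub_mem (hp' (tGen 5) _ hx) (p.smul_mem z hx))
    rw [rep2_t] at this
    convert this using 1
    ext i; fin_cases i <;> simp
    rw [eq_comm, inv_mul_eq_one₀ ha]
    ring

lemma s_eq : sGen = tGen 5 * lGen * tGen 5 := by decide +kernel
lemma l_eq : lGen = sGen * tGen 5 * sGen ^ 3 := by decide +kernel

lemma rep3_s (z : ℂ) (hz : z ^ 4 + z ^ 3 + z ^ 2 + z + 1 = 0) (x y w : ℂ) :
    rep3 z hz sGen ![x, y, w] = ![z ^ 2 * w, -y, z ^ 3 * x] := by
  have h5 := z5 hz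
  rw [s_eq, map_mul, map_mul, Module.End.mul_apply, Module.End.mul_apply, rep3_t, rep3_l, rep3_t]
  ext i; fin_cases i <;> simp <;> grind

lemma irr3 (z : ℂ) (hz : z ^ 4 + z ^ 3 + z ^ 2 + z + 1 = 0) : IsIrreducibleRep (rep3 z hz) := by
  have h5 := z5 hz
  have hz0 := z0 hz
  refine ⟨inferInstance, fun p hp => ?_⟩
  have hp' : ∀ g, ∀ x ∈ p, rep3 z hz g x ∈ p := fun g x hx => hp g ⟨x, hx, rfl⟩
  by_cases hb : p = ⊥
  · exact Or.inl hb
  right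
  obtain ⟨x, hx, hx0⟩ := Submodule.exists_mem_ne_zero_of_ne_bot hb
  have e1 : ![(1 : ℂ), 0, 0] ∈ p → p = ⊤ := by
    intro h1
    have h3 : ![(0 : ℂ), 0, 1] ∈ p := by
      have := p.smul_mem (z ^ 2) (hp' sGen _ h1)
      rw [rep3_s] at this
      convert this using 1
      ext i; fin_cases i <;> simp
      linear_combination -h5
    have h2 : ![(0 : ℂ), 1, 0] ∈ p := by
      have := p.smul_mem (z ^ 3 / 2) (p.sub_mem (hp' (tGen 5) _ h3)
        (p.smul_mem (z ^ 2) (p.add_mem h1 h3)))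
      rw [rep3_t] at this
      convert this using 1
      ext i; fin_cases i <;> simp
      linear_combination -h5
    rw [eq_top_iff]
    intro y _
    have : y = y 0 • ![(1 : ℂ), 0, 0] + y 1 • ![(0 : ℂ), 1, 0] + y 2 • ![(0 : ℂ), 0, 1] := by
      ext i; fin_cases i <;> simp
    rw [this]
    exact p.add_mem (p.add_mem (p.smul_mem _ h1) (p.smul_mem _ h2)) (p.smul_mem _ h3)
  by_contra htop
  have al : ∀ a b c : ℂ, ![a, b, c] ∈ p →
      (z ^ 3 - 1) * (z ^ 3 - z ^ 2) * a + (z ^ 3 - z ^ 2) * b + (1 + z ^ 2) * c = 0 := by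
    intro a b c h
    by_contra hne
    apply htop
    apply e1
    have h1 := p.sub_mem (hp' (tGen 5) _ h) (p.smul_mem (z ^ 2) h)
    have h2 := p.smul_mem (((z ^ 3 - 1) * (z ^ 3 - z ^ 2) * a + (z ^ 3 - z ^ 2) * b
      + (1 + z ^ 2) * c)⁻¹) (p.sub_mem (hp' (tGen 5) _ h1) h1)
    rw [rep3_t] at h2
    simp only [Matrix.smul_cons, Matrix.sub_cons, Matrix.head_cons, Matrix.tail_cons,
      Matrix.smul_empty, smul_eq_mul, Matrix.empty_sub_empty] at h2
    rw [rep3_t] at h2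
    convert h2 using 1
    ext i; fin_cases i <;> simp
    rw [eq_comm, inv_mul_eq_one₀ hne]
    linear_combination (-c) * h5
  obtain ⟨a, b, c, rfl⟩ : ∃ a b c, x = ![a, b, c] :=
    ⟨x 0, x 1, x 2, by ext i; fin_cases i <;> rfl⟩
  have r1 := al _ _ _ hx
  have h2 := hp' sGen _ hx
  rw [rep3_s] at h2
  have r2 := al _ _ _ h2
  have h3 := hp' sGen _ (hp' (tGen 5) _ hx)
  rw [rep3_t, rep3_s] at h3
  have r3 := al _ _ _ h3
  apply hx0
  have ha : a = 0 := by
    have : a = ((-4) * z ^ 0 + (-1) * z ^ 1 + (-2) * z ^ 2 + (-3) * z ^ 3) * ((z ^ 3 - 1) * (z ^ 3 - z ^ 2) * a + (z ^ 3 - z ^ 2) * b + (1 + z ^ 2) * c)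
      + ((-2) * z ^ 0 + (-2) * z ^ 1 + (-3) * z ^ 3) * ((z ^ 3 - 1) * (z ^ 3 - z ^ 2) * (z ^ 2 * c) + (z ^ 3 - z ^ 2) * (-b) + (1 + z ^ 2) * (z ^ 3 * a))
      + ((1) * z ^ 0 + (2) * z ^ 1 + (-1) * z ^ 2 + (3) * z ^ 3) * ((z ^ 3 - 1) * (z ^ 3 - z ^ 2) * (z ^ 2 * (z ^ 2 * c)) + (z ^ 3 - z ^ 2) * (-(b + 2 * z ^ 2 * c)) + (1 + z ^ 2) * (z ^ 3 * (z ^ 3 * a + b + z ^ 2 * c))) := by grind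
    rw [this, r1, r2, r3]; ring
  have hb : b = 0 := by
    have : b = ((-5) * z ^ 0 + (2) * z ^ 1 + (-4) * z ^ 2 + (-1) * z ^ 3) * ((z ^ 3 - 1) * (z ^ 3 - z ^ 2) * a + (z ^ 3 - z ^ 2) * b + (1 + z ^ 2) * c)
      + ((-7) * z ^ 0 + (-2) * z ^ 1 + (-3) * z ^ 2 + (-6) * z ^ 3) * ((z ^ 3 - 1) * (z ^ 3 - z ^ 2) * (z ^ 2 * c) + (z ^ 3 - z ^ 2) * (-b) + (1 + z ^ 2) * (z ^ 3 * a))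
      + ((7) * z ^ 0 + (2) * z ^ 1 + (2) * z ^ 2 + (7) * z ^ 3) * ((z ^ 3 - 1) * (z ^ 3 - z ^ 2) * (z ^ 2 * (z ^ 2 * c)) + (z ^ 3 - z ^ 2) * (-(b + 2 * z ^ 2 * c)) + (1 + z ^ 2) * (z ^ 3 * (z ^ 3 * a + b + z ^ 2 * c))) := by grind
    rw [this, r1, r2, r3]; ring
  have hc : c = 0 := by
    have : c = ((2) * z ^ 1 + (-1) * z ^ 2 + (2) * z ^ 3) * ((z ^ 3 - 1) * (z ^ 3 - z ^ 2) * a + (z ^ 3 - z ^ 2) * b + (1 + z ^ 2) * c)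
      + ((-3) * z ^ 0 + (1) * z ^ 1 + (-2) * z ^ 2 + (-1) * z ^ 3) * ((z ^ 3 - 1) * (z ^ 3 - z ^ 2) * (z ^ 2 * c) + (z ^ 3 - z ^ 2) * (-b) + (1 + z ^ 2) * (z ^ 3 * a))
      + ((3) * z ^ 0 + (-1) * z ^ 1 + (2) * z ^ 2 + (1) * z ^ 3) * ((z ^ 3 - 1) * (z ^ 3 - z ^ 2) * (z ^ 2 * (z ^ 2 * c)) + (z ^ 3 - z ^ 2) * (-(b + 2 * z ^ 2 * c)) + (1 + z ^ 2) * (z ^ 3 * (z ^ 3 * a + b + z ^ 2 * c))) := by grind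
    rw [this, r1, r2, r3]; ring
  rw [ha, hb, hc]
  ext i; fin_cases i <;> rfl

end SL25

namespace SL25

lemma mem_spec2 (z : ℂ) (hz : z ^ 4 + z ^ 3 + z ^ 2 + z + 1 = 0) :
    spectrum ℂ (rep2 z hz (tGen 5)) = {z, z ^ 4} := by
  ext μ
  rw [rep2_apply, f2_t z hz, Matrix.spectrum_toLin', spectrum.mem_iff, Matrix.isUnit_iff_isUnit_det]
  simp only [Matrix.det_fin_two, isUnit_iff_ne_zero, not_not]
  simp [Matrix.algebraMap_matrix_apply, sub_eq_zero, or_comm]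

lemma mem_spec3 (z : ℂ) (hz : z ^ 4 + z ^ 3 + z ^ 2 + z + 1 = 0) :
    spectrum ℂ (rep3 z hz (tGen 5)) = {1, z ^ 2, z ^ 3} := by
  have h5 := z5 hz
  have h8 : (z ^ 4) ^ 2 = z ^ 3 := by linear_combination z ^ 3 * h5
  have h5' : z ^ 4 * z = 1 := by linear_combination h5
  ext μ
  rw [rep3_apply, f2_t z hz, Matrix.spectrum_toLin', spectrum.mem_iff, Matrix.isUnit_iff_isUnit_det]
  simp only [Matrix.det_fin_three, isUnit_iff_ne_zero, not_not]
  simp [Matrix.algebraMap_matrix_apply, sub_eq_zero, sq3, h8, h5']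
  tauto

lemma iso_spec {V W : Type} [AddCommGroup V] [Module ℂ V] [AddCommGroup W] [Module ℂ W]
    (ρ : Representation ℂ (SL2 5) V) (ρ' : Representation ℂ (SL2 5) W) (h : RepIso ρ ρ')
    (g : SL2 5) : spectrum ℂ (ρ g) = spectrum ℂ (ρ' g) := by
  obtain ⟨e, he⟩ := h
  have : ρ' g = e.conjAlgEquiv ℂ (ρ g) := by
    ext w
    simp [LinearEquiv.conjAlgEquiv, he]
  rw [this, AlgEquiv.spectrum_eq]

lemma iso_rank {V W : Type} [AddCommGroup V] [Module ℂ V] [AddCommGroup W] [Module ℂ W]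
    (ρ : Representation ℂ (SL2 5) V) (ρ' : Representation ℂ (SL2 5) W) (h : RepIso ρ ρ') :
    Module.finrank ℂ V = Module.finrank ℂ W := by
  obtain ⟨e, he⟩ := h
  exact e.finrank_eq

lemma nontriv {V : Type} [AddCommGroup V] [Module ℂ V] [Nontrivial V]
    (ρ : Representation ℂ (SL2 5) V) (μ : ℂ) (hμ : μ ≠ 1)
    (h : μ ∈ spectrum ℂ (ρ (tGen 5))) : IsNontrivialRep ρ := by
  refine ⟨tGen 5, fun h1 => ?_⟩
  rw [h1] at h
  have : spectrum ℂ (1 : Module.End ℂ V) = {1} := spectrum.one_eq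
  change μ ∈ spectrum ℂ (1 : Module.End ℂ V) at h
  rw [this] at h
  exact hμ h

lemma braid : tGen 5 * lGen * tGen 5 = lGen * tGen 5 * lGen := by decide +kernel
lemma s_mul : sGen ^ 3 * sGen = 1 := by decide +kernel

lemma lem2 {W : Type} [AddCommGroup W] [Module ℂ W]
    (ρ : Representation ℂ (SL2 5) W) (hirr : IsIrreducibleRep ρ)
    (z : ℂ) (hz : z ^ 4 + z ^ 3 + z ^ 2 + z + 1 = 0)
    (hq : ∀ x, ρ (tGen 5) (ρ (tGen 5) x) = (z + z ^ 4) • ρ (tGen 5) x - x)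
    (v : W) (hv : v ≠ 0) (hTv : ρ (tGen 5) v = z ^ 4 • v)
    (y : W) (hy : y ≠ 0) (hTy : ρ (tGen 5) y = z • y) : RepIso ρ (rep2 z hz) := by
  have h5 := z5 hz
  have hBB : ∀ x, ρ lGen (ρ lGen x) = (z + z ^ 4) • ρ lGen x - x := by
    intro x
    have hss : ∀ x, ρ (sGen ^ 3) (ρ sGen x) = x := by
      intro x
      rw [← Module.End.mul_apply, ← map_mul, s_mul]; simp
    have hss' : ∀ x, ρ sGen (ρ (sGen ^ 3) x) = x := by
      intro x
      rw [← Module.End.mul_apply, ← map_mul, ← pow_succ', pow_succ, s_mul]; simp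
    have hl : ∀ x, ρ lGen x = ρ sGen (ρ (tGen 5) (ρ (sGen ^ 3) x)) := by
      intro x
      rw [l_eq, map_mul, map_mul]; rfl
    rw [hl, hl, hss, hq, map_sub, map_smul, hss']
  have hbr : ∀ x, ρ (tGen 5) (ρ lGen (ρ (tGen 5) x)) = ρ lGen (ρ (tGen 5) (ρ lGen x)) := by
    intro x
    have := congrArg (fun g => ρ g x) braid
    simpa [map_mul] using this
  generalize hT : ρ (tGen 5) = T at *
  generalize hB : ρ lGen = B at *
  obtain ⟨e2, he2⟩ : ∃ e2, e2 = -z • (B v - z • v) := ⟨_, rfl⟩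
  have hBv : B v = z • v - z ^ 4 • e2 := by
    rw [he2]
    match_scalars
    · linear_combination -h5
    · linear_combination z * h5
  have hBe2 : B e2 = z ^ 4 • e2 := by
    rw [he2]
    simp only [map_smul, map_sub, hBB]
    match_scalars
    · ring
    · linear_combination -z * h5
  have hTe : ∃ u, T e2 = z • v + z • e2 + u := ⟨T e2 - (z • v + z • e2), by abel⟩
  obtain ⟨u, hu⟩ := hTe
  have hTu : T u = z ^ 4 • u := by
    have h1 := hq e2
    rw [hu] at h1
    simp only [map_add, map_smul, hTv, hu] at h1
    have h2 : T u = (z + z ^ 4) • (z • v + z • e2 + u) - e2 -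
       (z • z ^ 4 • v + z • (z • v + z • e2 + u)) := by
      rw [← h1]; abel
    rw [h2]
    match_scalars
    · ring
    · linear_combination h5
    · ring
  have hBu : B u = z ^ 4 • u := by
    have h1 := hbr v
    rw [hTv] at h1
    simp only [map_add, map_sub, map_smul, hBv, hTv, hu, hBe2] at h1
    have h2 : B u = z • (z • z ^ 4 • (z • v - z ^ 4 • e2)
      - z ^ 4 • (z • (z • v - z ^ 4 • e2) + z • z ^ 4 • e2)
      - z ^ 4 • (z • z ^ 4 • v - z ^ 4 • (z • v + z • e2 + u))) + (1 - z ^ 5) • B u := by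
      rw [h1]
      module
    rw [h5, sub_self, zero_smul, add_zero] at h2
    rw [h2]
    match_scalars
    · ring
    · ring
    · linear_combination z ^ 4 * h5
  have hu0 : u = 0 := by
    by_contra hu0
    have htop := inv_top ρ hirr (Submodule.span ℂ {u})
      (by
        intro x hx
        obtain ⟨a, rfl⟩ := Submodule.mem_span_singleton.mp hx
        rw [hT, map_smul, hTu]
        exact Submodule.smul_mem _ _ (Submodule.smul_mem _ _ (Submodule.mem_span_singleton_self u)))
      (Or.inl (by
        intro x hx
        obtain ⟨a, rfl⟩ := Submodule.mem_span_singleton.mp hx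
        rw [hB, map_smul, hBu]
        exact Submodule.smul_mem _ _ (Submodule.smul_mem _ _ (Submodule.mem_span_singleton_self u))))
      u hu0 (Submodule.mem_span_singleton_self u)
    have hyt : y ∈ (⊤ : Submodule ℂ W) := trivial
    rw [← htop] at hyt
    obtain ⟨a, rfl⟩ := Submodule.mem_span_singleton.mp hyt
    rw [map_smul, hTu, smul_comm] at hTy
    have : (z ^ 4 - z) • (a • u) = 0 := by rw [sub_smul, hTy, sub_self]
    rcases smul_eq_zero.mp this with h | h
    · have hz1 := z1 hz
      apply hz1
      grind
    · exact hy h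
  rw [hu0, add_zero] at hu
  refine schur ρ (rep2 z hz) hirr (irr2 z hz) (Fintype.linearCombination ℂ ![v, e2]) ?_ ?_
  · have hx : ∀ x : Fin 2 → ℂ, x = ![x 0, x 1] := by
      intro x; ext i; fin_cases i <;> rfl
    apply comm_all
    · intro x
      rw [hx x, rep2_t, hT]
      simp [Fintype.linearCombination_apply, Fin.sum_univ_two, hTv, hu]
      module
    · left
      intro x
      rw [hx x, rep2_l, hB]
      simp [Fintype.linearCombination_apply, Fin.sum_univ_two, hBv, hBe2]
      module
  · intro h
    apply hv
    have := congrArg (fun f => f ![1, 0]) h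
    simpa [Fintype.linearCombination_apply, Fin.sum_univ_two] using this

end SL25

namespace SL25

lemma rel_th : tGen 5 * hGen = hGen * tGen 5 ^ 4 := by decide +kernel
lemma rel_t5 : tGen 5 ^ 5 = 1 := by decide +kernel
lemma rel_h4 : hGen ^ 4 = 1 := by decide +kernel
lemma rel_ss : sGen * sGen = hGen ^ 2 := by decide +kernel
lemma rel_1 : sGen * tGen 5 * sGen = tGen 5 ^ 4 * sGen * tGen 5 ^ 4 * hGen ^ 2 := by decide +kernel
lemma rel_2 : sGen * tGen 5 ^ 2 * sGen = tGen 5 ^ 2 * sGen * tGen 5 ^ 3 * hGen ^ 3 := by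
  decide +kernel
lemma rel_3 : sGen * tGen 5 ^ 3 * sGen = tGen 5 ^ 3 * sGen * tGen 5 ^ 2 * hGen := by
  decide +kernel

lemma h_eig {W : Type} [AddCommGroup W] [Module ℂ W] [FiniteDimensional ℂ W]
    (ρ : Representation ℂ (SL2 5) W) (v : W) (hv : v ≠ 0) (hTv : ρ (tGen 5) v = v) :
    ∃ (x : ℂ) (u : W), u ≠ 0 ∧ ρ (tGen 5) u = u ∧ ρ hGen u = x • u := by
  let p : Submodule ℂ W := LinearMap.ker (ρ (tGen 5) - 1)
  have hmem : ∀ u, u ∈ p ↔ ρ (tGen 5) u = u := by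
    intro u
    simp [p, LinearMap.mem_ker, sub_eq_zero]
  have hp : ∀ u ∈ p, ρ hGen u ∈ p := by
    intro u hu
    rw [hmem] at hu ⊢
    rw [← Module.End.mul_apply, ← map_mul, rel_th, map_mul, map_pow, Module.End.mul_apply]
    simp [pow_succ, hu]
  have : Nontrivial p := ⟨⟨⟨v, (hmem v).2 hTv⟩, 0, fun h => hv (congrArg Subtype.val h)⟩⟩
  obtain ⟨x, hx⟩ := Module.End.exists_eigenvalue ((ρ hGen).restrict hp)
  obtain ⟨u, hu⟩ := hx.exists_hasEigenvector
  refine ⟨x, u, fun h => hu.2 (Subtype.ext h), (hmem _).1 u.2, ?_⟩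
  have := congrArg Subtype.val hu.apply_eq_smul
  simpa using this

set_option maxHeartbeats 1000000 in
lemma lem3 {W : Type} [AddCommGroup W] [Module ℂ W] [FiniteDimensional ℂ W]
    (ρ : Representation ℂ (SL2 5) W) (hirr : IsIrreducibleRep ρ)
    (z : ℂ) (hz : z ^ 4 + z ^ 3 + z ^ 2 + z + 1 = 0)
    (hq : ∀ x, ρ (tGen 5) (ρ (tGen 5) (ρ (tGen 5) x)) =
      (1 + (z ^ 2 + z ^ 3)) • ρ (tGen 5) (ρ (tGen 5) x)
        - (1 + (z ^ 2 + z ^ 3)) • ρ (tGen 5) x + x)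
    (v₀ : W) (hv₀ : v₀ ≠ 0) (hTv₀ : ρ (tGen 5) v₀ = v₀)
    (y : W) (hTy : ρ (tGen 5) y ≠ y) : RepIso ρ (rep3 z hz) := by
  have h5 := z5 hz
  obtain ⟨x, v, hv, hTv, hHv⟩ := h_eig ρ v₀ hv₀ hTv₀
  have hx4 : x ^ 4 = 1 := by
    have := congrArg (fun g => ρ g v) rel_h4
    simp only [map_mul, pow_succ, pow_zero, one_mul, Module.End.mul_apply, hHv, map_smul, map_one,
      Module.End.one_apply] at this
    have h0 : (x ^ 4 - 1) • v = 0 := by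
      rw [sub_smul, one_smul, sub_eq_zero]
      refine Eq.trans ?_ this
      module
    rcases smul_eq_zero.mp h0 with h | h
    · linear_combination h
    · exact absurd h hv
  obtain ⟨w, hw⟩ : ∃ w, w = ρ sGen v := ⟨_, rfl⟩
  have h0 := congrArg (fun g => ρ g v) rel_ss
  have h1 := congrArg (fun g => ρ g v) rel_1
  have h2 := congrArg (fun g => ρ g v) rel_2
  have h3 := congrArg (fun g => ρ g v) rel_3
  simp only [map_mul, pow_succ, pow_zero, one_mul, Module.End.mul_apply, hHv, hTv,
    map_smul, ← hw] at h0 h1 h2 h3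
  generalize hT : ρ (tGen 5) = T at *
  generalize hS : ρ sGen = S at *
  obtain ⟨d, hd⟩ : ∃ d, d = z ^ 2 + z ^ 3 := ⟨_, rfl⟩
  have hd2 : d ^ 2 = 1 - d := by rw [hd]; linear_combination (z ^ 2 + z - 1) * hz
  rw [← hd] at hq
  obtain ⟨w1, hw1⟩ : ∃ w1, T w = w1 := ⟨_, rfl⟩
  obtain ⟨w2, hw2⟩ : ∃ w2, T w1 = w2 := ⟨_, rfl⟩
  have hw3 : T w2 = (1 + d) • w2 - (1 + d) • w1 + w := by
    have := hq w
    rwa [hw1, hw2] at this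
  have hw4 : T (T w2) = w2 - (1 + d) • w1 + (1 + d) • w := by
    rw [hw3]
    simp only [map_add, map_sub, map_smul, hw1, hw2, hw3]
    match_scalars
    · linear_combination hd2
    · linear_combination -hd2
    · ring
  simp only [hw1, hw2, hw4] at h0 h1 h2 h3
  rw [hw3] at h3
  have hxv : x • x • v = x • ((1 + d) • w2 - (1 + d) • w1 + w) - (1 + d) • x • x • x • w2
      + (1 + d) • x • x • (w2 - (1 + d) • w1 + (1 + d) • w) := by
    rw [← h3, ← h2, ← h1, ← h0]
    simp only [map_add, map_sub, map_smul]
    abel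
  by_cases hx1 : x = -1
  · subst hx1
    have hvw : v = -((1 + d) • w2 - (1 + d) • w1 + w) + (1 + d) • w2
      + (1 + d) • (w2 - (1 + d) • w1 + (1 + d) • w) := by
      have : v = (-1 : ℂ) • (-1 : ℂ) • v := by simp
      rw [this, hxv]
      module
    have hSw : S w = v := by rw [h0]; simp
    have hSw1 : S w1 = w2 - (1 + d) • w1 + (1 + d) • w := by rw [h1]; simp
    have hSw2 : S w2 = -w2 := by rw [h2]; simp
    refine schur ρ (rep3 z hz) hirr (irr3 z hz) (Fintype.linearCombination ℂ
      ![(1 + z + z ^ 3) • w + (-z + z ^ 2 - z ^ 3) • w1 + (-1 - z ^ 2) • w2,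
        (1 + z ^ 2 + z ^ 3) • w + (-2 - z ^ 2 - z ^ 3) • w1 + (2 + z + z ^ 2 + 2 * z ^ 3) • w2,
        (-1 - z - 2 * z ^ 3) • w + (2 + z + 2 * z ^ 3) • w1 + (-1 - 2 * z - 2 * z ^ 3) • w2]) ?_ ?_
    · have hx : ∀ x : Fin 3 → ℂ, x = ![x 0, x 1, x 2] := by
        intro x; ext i; fin_cases i <;> rfl
      apply comm_all
      · intro x
        rw [hx x, rep3_t, hT]
        simp only [Fintype.linearCombination_apply, Fin.sum_univ_three, Matrix.cons_val_zero,
          Matrix.cons_val_one, Matrix.cons_val, map_add, map_smul, hw1, hw2, hw3, hd]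
        match_scalars <;> grind
      · right
        intro x
        rw [hx x, rep3_s, hS]
        simp only [Fintype.linearCombination_apply, Fin.sum_univ_three, Matrix.cons_val_zero,
          Matrix.cons_val_one, Matrix.cons_val, map_add, map_smul, hSw, hSw1, hSw2, hvw, hd]
        match_scalars <;> grind
    · intro h
      have hw0 : w = 0 := by
        have := congrArg (fun f => f ![0, z ^ 3 - 1, z ^ 3]) h
        simp only [Fintype.linearCombination_apply, Fin.sum_univ_three, Matrix.cons_val_zero,
          Matrix.cons_val_one, Matrix.cons_val, LinearMap.zero_apply] at this
        rw [← this]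
        match_scalars <;> grind
      apply hv
      rw [← hSw, hw0, map_zero]
  · exfalso
    have hx3 : x ^ 3 - x ^ 2 + x - 1 = 0 := by
      have : (x + 1) * (x ^ 3 - x ^ 2 + x - 1) = 0 := by linear_combination hx4
      rcases mul_eq_zero.mp this with h | h
      · exact absurd (by linear_combination h) hx1
      · exact h
    obtain ⟨q1, hq1⟩ : ∃ q1, q1 = -(x ^ 3 + (1 + d) * x ^ 2 + d * x) := ⟨_, rfl⟩
    obtain ⟨q0, hq0⟩ : ∃ q0, q0 = (1 + d) * x ^ 3 + x ^ 2 - d * x := ⟨_, rfl⟩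
    have hR : q1 • (w2 - w1) + q0 • (w1 - w) = 0 := by
      have hTT := congrArg T hxv
      simp only [map_add, map_sub, map_smul, hTv, hw1, hw2, hw3] at hTT
      rw [hxv, eq_comm, ← sub_eq_zero] at hTT
      rw [← hTT, hq1, hq0]
      match_scalars <;> grind
    have hTR := congrArg T hR
    simp only [map_add, map_sub, map_smul, hw1, hw2, hw3, map_zero] at hTR
    have hN : (q0 ^ 2 + q0 * q1 * d + q1 ^ 2) • (w1 - w) = 0 := by
      have : (q0 ^ 2 + q0 * q1 * d + q1 ^ 2) • (w1 - w) =
        (q1 * d + q0) • (q1 • (w2 - w1) + q0 • (w1 - w))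
        - q1 • (q1 • ((1 + d) • w2 - (1 + d) • w1 + w - w2) + q0 • (w2 - w1)) := by
        module
      rw [this, hR, hTR]; simp
    have hN1 : (q0 ^ 2 + q0 * q1 * d + q1 ^ 2) *
        (3 / 40 - x / 10 + 11 / 40 * x ^ 2 + d / 40 - d * x / 5 - 3 / 40 * d * x ^ 2) = 1 := by
      rw [hq0, hq1]
      clear * - hd2 hx3
      grind
    have hww : w1 = w := by
      rcases smul_eq_zero.mp hN with h | h
      · rw [h] at hN1; simp at hN1
      · exact sub_eq_zero.mp h
    have htop := inv_top ρ hirr (Submodule.span ℂ {v, w})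
      (by
        intro y hy
        obtain ⟨a, b, rfl⟩ := Submodule.mem_span_pair.mp hy
        rw [hT, map_add, map_smul, map_smul, hTv, hw1, hww]
        exact hy)
      (Or.inr (by
        intro y hy
        obtain ⟨a, b, rfl⟩ := Submodule.mem_span_pair.mp hy
        rw [hS, map_add, map_smul, map_smul, h0, ← hw]
        exact Submodule.mem_span_pair.mpr ⟨b * x * x, a, by module⟩))
      v hv (Submodule.subset_span (by simp))
    have hyt : y ∈ (⊤ : Submodule ℂ W) := trivial
    rw [← htop] at hyt
    obtain ⟨a, b, rfl⟩ := Submodule.mem_span_pair.mp hyt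
    apply hTy
    rw [map_add, map_smul, map_smul, hTv, hw1, hww]

end SL25

namespace SL25

lemma zeta_root : (ζ 5) ^ 4 + (ζ 5) ^ 3 + (ζ 5) ^ 2 + ζ 5 + 1 = 0 := by
  have hp : IsPrimitiveRoot (ζ 5) 5 := by
    have := Complex.isPrimitiveRoot_exp 5 (by norm_num)
    simpa [ζ] using this
  have h5 := hp.pow_eq_one
  have h1 : ζ 5 - 1 ≠ 0 := sub_ne_zero.mpr (hp.ne_one (by norm_num))
  apply mul_left_cancel₀ h1
  linear_combination h5

section
variable {W : Type} [AddCommGroup W] [Module ℂ W] [FiniteDimensional ℂ W]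
  (ρ : Representation ℂ (SL2 5) W)

lemma T5 (x : W) : ρ (tGen 5) (ρ (tGen 5) (ρ (tGen 5) (ρ (tGen 5) (ρ (tGen 5) x)))) = x := by
  have := congrArg (fun g => ρ g x) rel_t5
  simpa [map_mul, pow_succ] using this

lemma eig {μ : ℂ} (h : μ ∈ spectrum ℂ (ρ (tGen 5))) : ∃ v, v ≠ 0 ∧ ρ (tGen 5) v = μ • v := by
  rw [← Module.End.hasEigenvalue_iff_mem_spectrum] at h
  obtain ⟨v, hv⟩ := h.exists_hasEigenvector
  exact ⟨v, hv.2, hv.apply_eq_smul⟩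

lemma mem_of_eig {μ : ℂ} {v : W} (h0 : v ≠ 0) (h : ρ (tGen 5) v = μ • v) :
    μ ∈ spectrum ℂ (ρ (tGen 5)) := by
  rw [← Module.End.hasEigenvalue_iff_mem_spectrum]
  exact Module.End.hasEigenvalue_of_hasEigenvector (x := v)
    ⟨Module.End.mem_eigenspace_iff.mpr h, h0⟩

lemma noeig {μ : ℂ} {v : W} (h0 : μ ∉ spectrum ℂ (ρ (tGen 5))) (h : ρ (tGen 5) v = μ • v) :
    v = 0 := by
  by_contra hv
  exact h0 (mem_of_eig ρ hv h)

lemma pow4 {μ : ℂ} (h : μ ∈ spectrum ℂ (ρ (tGen 5))) : μ ^ 4 ∈ spectrum ℂ (ρ (tGen 5)) := by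
  obtain ⟨v, hv, hT⟩ := eig ρ h
  refine mem_of_eig ρ (v := ρ hGen v) ?_ ?_
  · intro h0
    apply hv
    have := congrArg (fun g => ρ g v) rel_h4
    simp only [map_mul, pow_succ, pow_zero, one_mul, Module.End.mul_apply, h0, map_zero, map_one,
      Module.End.one_apply] at this
    exact this.symm
  · have := congrArg (fun g => ρ g v) rel_th
    simp only [map_mul, pow_succ, pow_zero, one_mul, Module.End.mul_apply, hT, map_smul] at this
    rw [this]
    module

lemma main_case (hirr : IsIrreducibleRep ρ)
    (hcard : (spectrum ℂ (ρ (tGen 5))).ncard ≤ 3)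
    (z : ℂ) (hz : z ^ 4 + z ^ 3 + z ^ 2 + z + 1 = 0) (hmem : z ∈ spectrum ℂ (ρ (tGen 5))) :
    RepIso ρ (rep2 z hz) ∨ RepIso ρ (rep3 (z ^ 2) (sq_root hz)) := by
  have h5 := z5 hz
  have hz1 := z1 hz
  have hz0 := z0 hz
  have h4 := pow4 ρ hmem
  have hfin : (spectrum ℂ (ρ (tGen 5))).Finite := Module.End.finite_spectrum _
  have h2 : z ^ 2 ∉ spectrum ℂ (ρ (tGen 5)) := by
    intro h2
    have h3 := pow4 ρ h2
    have h8 : (z ^ 2) ^ 4 = z ^ 3 := by linear_combination z ^ 3 * h5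
    rw [h8] at h3
    have hsub : ({z, z ^ 2, z ^ 3, z ^ 4} : Set ℂ) ⊆ spectrum ℂ (ρ (tGen 5)) := by
      intro x hx
      rcases hx with rfl | rfl | rfl | rfl <;> assumption
    have hle := Set.ncard_le_ncard hsub hfin
    have d1 : z ≠ z ^ 2 := by intro h; grind
    have d2 : z ≠ z ^ 3 := by intro h; grind
    have d3 : z ≠ z ^ 4 := by intro h; grind
    have d4 : z ^ 2 ≠ z ^ 3 := by intro h; grind
    have d5 : z ^ 2 ≠ z ^ 4 := by intro h; grind
    have d6 : z ^ 3 ≠ z ^ 4 := by intro h; grind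
    have hc : ({z, z ^ 2, z ^ 3, z ^ 4} : Set ℂ).ncard = 4 := by
      have : ({z, z ^ 2, z ^ 3, z ^ 4} : Set ℂ) = (({z, z ^ 2, z ^ 3, z ^ 4} : Finset ℂ) : Set ℂ) := by
        simp
      rw [this, Set.ncard_coe_finset]
      rw [Finset.card_insert_of_notMem, Finset.card_insert_of_notMem,
        Finset.card_insert_of_notMem, Finset.card_singleton] <;> simp [d1, d2, d3, d4, d5, d6]
    omega
  have h3 : z ^ 3 ∉ spectrum ℂ (ρ (tGen 5)) := by
    intro h3
    have := pow4 ρ h3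
    rw [show (z ^ 3) ^ 4 = z ^ 2 by linear_combination (z ^ 7 + z ^ 2) * h5] at this
    exact h2 this
  obtain ⟨y, hy, hTy⟩ := eig ρ hmem
  obtain ⟨v, hv, hTv⟩ := eig ρ h4
  have hT5 := T5 ρ
  have hcub : ∀ x, ρ (tGen 5) (ρ (tGen 5) (ρ (tGen 5) x)) =
      (1 + ((z ^ 2) ^ 2 + (z ^ 2) ^ 3)) • ρ (tGen 5) (ρ (tGen 5) x)
        - (1 + ((z ^ 2) ^ 2 + (z ^ 2) ^ 3)) • ρ (tGen 5) x + x := by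
    intro x
    have h6 : z ^ 4 + z = (z ^ 2) ^ 2 + (z ^ 2) ^ 3 := by linear_combination -z * h5
    rw [← h6]
    have hT5 := hT5 x
    rw [← sub_eq_zero]
    apply noeig ρ h2
    rw [← sub_eq_zero]
    apply noeig ρ h3
    rw [← sub_eq_zero]
    simp only [map_add, map_sub, map_smul, hT5]
    match_scalars <;> grind
  by_cases h1 : (1 : ℂ) ∈ spectrum ℂ (ρ (tGen 5))
  · right
    obtain ⟨v₀, hv₀, hTv₀⟩ := eig ρ h1
    rw [one_smul] at hTv₀
    refine lem3 ρ hirr (z ^ 2) (sq_root hz) hcub v₀ hv₀ hTv₀ y ?_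
    intro h
    rw [hTy, ← sub_eq_zero] at h
    have : (z - 1) • y = 0 := by rw [← h]; module
    rcases smul_eq_zero.mp this with h | h
    · exact hz1 (sub_eq_zero.mp h)
    · exact hy h
  · left
    refine lem2 ρ hirr z hz ?_ v hv hTv y hy hTy
    intro x
    rw [← sub_eq_zero]
    apply noeig ρ h1
    rw [one_smul]
    simp only [map_add, map_sub, map_smul, hcub]
    match_scalars <;> grind

lemma triv_case 
    (h1 : ζ 5 ∉ spectrum ℂ (ρ (tGen 5))) (h2 : ζ 5 ^ 2 ∉ spectrum ℂ (ρ (tGen 5))) :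
    ¬ IsNontrivialRep ρ := by
  have hz := zeta_root
  generalize ζ 5 = z at *
  have h5 := z5 hz
  have h4 : z ^ 4 ∉ spectrum ℂ (ρ (tGen 5)) := by
    intro h
    have := pow4 ρ h
    rw [show (z ^ 4) ^ 4 = z by linear_combination (z ^ 11 + z ^ 6 + z) * h5] at this
    exact h1 this
  have h3 : z ^ 3 ∉ spectrum ℂ (ρ (tGen 5)) := by
    intro h3
    have := pow4 ρ h3
    rw [show (z ^ 3) ^ 4 = z ^ 2 by linear_combination (z ^ 7 + z ^ 2) * h5] at this
    exact h2 this
  have hT : ∀ x, ρ (tGen 5) x = x := by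
    intro x
    have hT5 := T5 ρ x
    rw [← sub_eq_zero]
    apply noeig ρ h1
    rw [← sub_eq_zero]
    apply noeig ρ h2
    rw [← sub_eq_zero]
    apply noeig ρ h3
    rw [← sub_eq_zero]
    apply noeig ρ h4
    rw [← sub_eq_zero]
    simp only [map_sub, map_smul, hT5]
    match_scalars <;> grind
  have hall : ∀ g, ∀ x, ρ g x = x := by
    refine gen_ind _ (by simp) ?_ hT ?_
    · intro g h hg hh x
      rw [map_mul, Module.End.mul_apply, hh, hg]
    · intro x
      rw [l_eq, map_mul, map_mul, Module.End.mul_apply, Module.End.mul_apply, hT,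
        ← Module.End.mul_apply, ← map_mul, ← pow_succ', pow_succ, s_mul]
      simp
  rintro ⟨g, hg⟩
  exact hg (LinearMap.ext (hall g))

end

end SL25

/-- Up to isomorphism, `SL(2, ℤ/5ℤ)` has exactly four nontrivial irreducible
finite-dimensional complex representations `ρ` for which `ρ(t)` has at most three distinct
eigenvalues: two of dimension `2`, with `t`-spectra `{ζ₅, ζ₅⁴}` and `{ζ₅², ζ₅³}`, and two
of dimension `3`, with `t`-spectra `{1, ζ₅, ζ₅⁴}` and `{1, ζ₅², ζ₅³}`. -/
theorem stmt7 :
    ∃ (ρ₁ ρ₂ : Representation ℂ (SL2 5) (Fin 2 → ℂ))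
      (ρ₃ ρ₄ : Representation ℂ (SL2 5) (Fin 3 → ℂ)),
      (IsIrreducibleRep ρ₁ ∧ IsNontrivialRep ρ₁ ∧
        spectrum ℂ (ρ₁ (tGen 5)) = {ζ 5, ζ 5 ^ 4}) ∧
      (IsIrreducibleRep ρ₂ ∧ IsNontrivialRep ρ₂ ∧
        spectrum ℂ (ρ₂ (tGen 5)) = {ζ 5 ^ 2, ζ 5 ^ 3}) ∧
      (IsIrreducibleRep ρ₃ ∧ IsNontrivialRep ρ₃ ∧
        spectrum ℂ (ρ₃ (tGen 5)) = {1, ζ 5, ζ 5 ^ 4}) ∧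
      (IsIrreducibleRep ρ₄ ∧ IsNontrivialRep ρ₄ ∧
        spectrum ℂ (ρ₄ (tGen 5)) = {1, ζ 5 ^ 2, ζ 5 ^ 3}) ∧
      (¬ RepIso ρ₁ ρ₂ ∧ ¬ RepIso ρ₁ ρ₃ ∧ ¬ RepIso ρ₁ ρ₄ ∧
       ¬ RepIso ρ₂ ρ₃ ∧ ¬ RepIso ρ₂ ρ₄ ∧ ¬ RepIso ρ₃ ρ₄) ∧
      (∀ (W : Type) [AddCommGroup W] [Module ℂ W] [FiniteDimensional ℂ W]
        (ρ : Representation ℂ (SL2 5) W),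
        IsIrreducibleRep ρ → IsNontrivialRep ρ →
        (spectrum ℂ (ρ (tGen 5))).ncard ≤ 3 →
        RepIso ρ ρ₁ ∨ RepIso ρ ρ₂ ∨ RepIso ρ ρ₃ ∨ RepIso ρ ρ₄) := by
  have hz := SL25.zeta_root
  have h5 := SL25.z5 hz
  have hz0 := SL25.z0 hz
  have hz1 := SL25.z1 hz
  have hz2 := SL25.sq_root hz
  have hz4 := SL25.sq_root hz2
  have s1 := SL25.mem_spec2 _ hz
  have s2 := SL25.mem_spec2 _ hz2
  have s3 := SL25.mem_spec3 _ hz2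
  have s4 := SL25.mem_spec3 _ hz4
  have key : ∀ (W : Type) [AddCommGroup W] [Module ℂ W] [FiniteDimensional ℂ W]
        (ρ : Representation ℂ (SL2 5) W),
        IsIrreducibleRep ρ → IsNontrivialRep ρ →
        (spectrum ℂ (ρ (tGen 5))).ncard ≤ 3 →
        RepIso ρ (SL25.rep2 _ hz) ∨ RepIso ρ (SL25.rep2 _ hz2) ∨ RepIso ρ (SL25.rep3 _ hz2) ∨
          RepIso ρ (SL25.rep3 _ hz4) := by
    intro W _ _ _ ρ hirr hnt hcard
    by_cases h1 : ζ 5 ∈ spectrum ℂ (ρ (tGen 5))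
    · rcases SL25.main_case ρ hirr hcard _ hz h1 with h | h
      · exact Or.inl h
      · exact Or.inr (Or.inr (Or.inl h))
    by_cases h2 : ζ 5 ^ 2 ∈ spectrum ℂ (ρ (tGen 5))
    · rcases SL25.main_case ρ hirr hcard _ hz2 h2 with h | h
      · exact Or.inr (Or.inl h)
      · exact Or.inr (Or.inr (Or.inr h))
    exact absurd hnt (SL25.triv_case ρ h1 h2)
  refine ⟨SL25.rep2 _ hz, SL25.rep2 _ hz2, SL25.rep3 _ hz2, SL25.rep3 _ hz4,
    ⟨SL25.irr2 _ _, SL25.nontriv _ (ζ 5) hz1 (by rw [s1]; simp), s1⟩,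
    ⟨SL25.irr2 _ _, SL25.nontriv _ (ζ 5 ^ 2) (SL25.z1 hz2) (by rw [s2]; simp), ?_⟩,
    ⟨SL25.irr3 _ _, SL25.nontriv _ ((ζ 5 ^ 2) ^ 2) (SL25.z1 hz4) (by rw [s3]; simp), ?_⟩,
    ⟨SL25.irr3 _ _, SL25.nontriv _ (((ζ 5 ^ 2) ^ 2) ^ 2) (SL25.z1 (SL25.sq_root hz4))
      (by rw [s4]; simp), ?_⟩,
    ⟨?_, ?_, ?_, ?_, ?_, ?_⟩, key⟩
  · rw [s2, show (ζ 5 ^ 2) ^ 4 = ζ 5 ^ 3 by linear_combination ζ 5 ^ 3 * h5]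
  · rw [s3, show (ζ 5 ^ 2) ^ 2 = ζ 5 ^ 4 by ring,
      show (ζ 5 ^ 2) ^ 3 = ζ 5 by linear_combination ζ 5 * h5, Set.pair_comm]
  · rw [s4, show ((ζ 5 ^ 2) ^ 2) ^ 2 = ζ 5 ^ 3 by linear_combination ζ 5 ^ 3 * h5,
      show ((ζ 5 ^ 2) ^ 2) ^ 3 = ζ 5 ^ 2 by linear_combination (ζ 5 ^ 7 + ζ 5 ^ 2) * h5,
      Set.pair_comm]
  · intro h
    have := SL25.iso_spec _ _ h (tGen 5)
    rw [s1, s2] at this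
    have hm : ζ 5 ∈ ({ζ 5 ^ 2, (ζ 5 ^ 2) ^ 4} : Set ℂ) := by rw [← this]; simp
    generalize ζ 5 = z at *
    rcases hm with h | h
    · grind
    · have h : z = (z ^ 2) ^ 4 := h
      grind
  · intro h; simpa using SL25.iso_rank _ _ h
  · intro h; simpa using SL25.iso_rank _ _ h
  · intro h; simpa using SL25.iso_rank _ _ h
  · intro h; simpa using SL25.iso_rank _ _ h
  · intro h
    have := SL25.iso_spec _ _ h (tGen 5)
    rw [s3, s4] at this
    have hm : (ζ 5 ^ 2) ^ 2 ∈ ({1, ((ζ 5 ^ 2) ^ 2) ^ 2, ((ζ 5 ^ 2) ^ 2) ^ 3} : Set ℂ) := by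
      rw [← this]; simp
    clear * - hm hz h5 hz0 hz1
    generalize ζ 5 = z at *
    rcases hm with h | h | h
    · grind
    · grind
    · have h : (z ^ 2) ^ 2 = ((z ^ 2) ^ 2) ^ 3 := h
      grind
end
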